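/- arXiv:1003.2699 — 2 statements merged into one kernel-verified Lean document; each statement's English description precedes it below -/
import Mathlib

section
/- (Theorem B, case ν = −1) Let μ ≥ 1 be an odd integer and ν = −1, let j ∈ ℕ, and let u : ℝ_+ → ℝ be a smooth function in L²(ℝ_+, x^{μ}dx) satisfying D_{μ,−1}u = 4j(j+μ+1)u on ℝ_+. Suppose the limit B := lim_{x→0+} u(x) exists. Then for all ϑ, φ ∈ [0,π] with cos ϑ + cos φ > 0, ∫₀^∞ u(x) J̃_{μ/2}(ax) J̃_{−1/2}(bx) x^{μ} dx = A · ((cos ϑ + cos φ)/2)^{(μ+1)/2} · C̃_j^{(μ+1)/2}(cos ϑ) · C̃_{j+(μ+1)/2}^{0}(cos φ), where a = sin ϑ/(cos ϑ + cos φ), b = sin φ/(cos ϑ + cos φ), and the constant A equals A = (−1)^j · (j! 2^{2μ−1} Γ((μ+2)/2) Γ((μ+1)/2) Γ(j+(μ+3)/2))/(Γ(j+(μ+1)/2) π Γ(j+μ+1)) · (−2/Γ(−1/2)) · B. -/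
open MeasureTheory Real Filter Set Metric

noncomputable section

/-- Normalized Bessel function of the first kind: `J̃_α(x) = (x/2)^{-α} J_α(x)`,
given by its (entire) power series. -/
def besselJt (α x : ℝ) : ℝ :=
  ∑' m : ℕ, (-1) ^ m / (m.factorial * Real.Gamma (m + α + 1)) * (x / 2) ^ (2 * m)

/-- Bessel function of the first kind `J_α`. -/
def besselJ (α x : ℝ) : ℝ :=
  ∑' m : ℕ, (-1) ^ m / (m.factorial * Real.Gamma (m + α + 1)) * (x / 2) ^ (2 * (m : ℝ) + α)

/-- Normalized modified Bessel function `Ĩ_α(x) = (x/2)^{-α} I_α(x)`,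
given by its (entire, even) power series. -/
def besselIt (α x : ℝ) : ℝ :=
  ∑' m : ℕ, (x / 2) ^ (2 * m) / (m.factorial * Real.Gamma (m + α + 1))

/-- Modified Bessel function of the first kind `I_α`. -/
def besselI (α x : ℝ) : ℝ :=
  ∑' m : ℕ, (x / 2) ^ (2 * (m : ℝ) + α) / (m.factorial * Real.Gamma (m + α + 1))

/-- Modified Bessel function of the second kind,
`K_α(x) = lim_{β→α} (π/2)(I_{−β}(x) − I_β(x))/sin(βπ)`. -/
def besselK (α x : ℝ) : ℝ :=
  limUnder (nhdsWithin α {α}ᶜ) fun β =>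
    Real.pi / 2 * (besselI (-β) x - besselI β x) / Real.sin (β * Real.pi)

/-- Normalized K-Bessel function `K̃_α(x) = (x/2)^{-α} K_α(x)`. -/
def besselKt (α x : ℝ) : ℝ := (x / 2) ^ (-α) * besselK α x

/-- Normalized Gegenbauer polynomial `C̃_n^λ = Γ(λ) C_n^λ`, where `C_n^λ` is defined via the
generating function `(1 − 2xt + t²)^{−λ} = Σ_{n≥0} C_n^λ(x) tⁿ`; explicitly,
`C̃_n^λ(x) = Σ_{k=0}^{⌊n/2⌋} (−1)^k Γ(λ+n−k)/(k!(n−2k)!) (2x)^{n−2k}`.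
This expression also gives the limit value `C̃_n^0 = lim_{λ→0+} Γ(λ) C_n^λ` for `n ≥ 1`. -/
def gegenbauerCt (n : ℕ) (l x : ℝ) : ℝ :=
  ∑ k ∈ Finset.range (n / 2 + 1),
    (-1) ^ k * Real.Gamma (l + n - k) / (k.factorial * (n - 2 * k).factorial)
      * (2 * x) ^ (n - 2 * k)

/-- Laguerre polynomial `L_n^μ(x) = Σ_{k=0}^n (−1)^k binom(n+μ, n−k) x^k/k!`
(with nonnegative integer parameter `μ`). -/
def laguerreL (n μ : ℕ) (x : ℝ) : ℝ :=
  ∑ k ∈ Finset.range (n + 1),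
    (-1) ^ k * (Nat.choose (n + μ) (n - k)) * x ^ k / k.factorial

/-- The Euler operator `θ = x d/dx`. -/
def eulerOp (u : ℝ → ℝ) : ℝ → ℝ := fun x => x * deriv u x

/-- `(θ+c)(θ+c+ν)u − x² u`, i.e. the operator `Q_ν(θ+c)` applied to `u`. -/
def besselQ (ν c : ℝ) (u : ℝ → ℝ) : ℝ → ℝ := fun x =>
  eulerOp (fun y => eulerOp u y + (c + ν) * u y) x
    + c * (eulerOp u x + (c + ν) * u x) - x ^ 2 * u x

/-- The fourth order differential operator
`D_{μ,ν} = x^{−2}((θ+μ)(θ+μ+ν) − x²)(θ(θ+ν) − x²)`. -/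
def Dop (μ ν : ℝ) (u : ℝ → ℝ) : ℝ → ℝ := fun x =>
  besselQ ν μ (besselQ ν 0 u) x / x ^ 2

/-- The generating function
`G^{μ,ν}(t,x) = (1−t)^{−(μ+ν+2)/2} Ĩ_{μ/2}(tx/(1−t)) K̃_{ν/2}(x/(1−t))`. -/
def genFun (μ ν t x : ℝ) : ℝ :=
  (1 - t) ^ (-(μ + ν + 2) / 2) * besselIt (μ / 2) (t * x / (1 - t))
    * besselKt (ν / 2) (x / (1 - t))

/-- The eigenfunctions `Λ_j^{μ,ν}`, defined as the Taylor coefficients in `t` at `t = 0` of the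
generating function `G^{μ,ν}(t,x) = Σ_{j≥0} Λ_j^{μ,ν}(x) t^j`. -/
def LambdaF (μ ν : ℝ) (j : ℕ) (x : ℝ) : ℝ :=
  iteratedDeriv j (fun t => genFun μ ν t x) 0 / j.factorial

/-- The integrality condition: `μ ≥ ν ≥ −1` are integers of the same parity,
not both equal to `−1`. -/
def IntCond (μ ν : ℤ) : Prop :=
  -1 ≤ ν ∧ ν ≤ μ ∧ Even (μ - ν) ∧ ¬(μ = -1 ∧ ν = -1)

end



/-- Term of the Gegenbauer sum, extended by zero. -/
noncomputable def geT (l y : ℝ) (n k : ℕ) : ℝ :=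
  if 2 * k ≤ n then
    (-1) ^ k * Real.Gamma (l + n - k) / (k.factorial * (n - 2 * k).factorial) * y ^ (n - 2 * k)
  else 0

lemma ge_eq_sum (n K : ℕ) (hK : n / 2 < K) (l x : ℝ) :
    gegenbauerCt n l x = ∑ k ∈ Finset.range K, geT l (2 * x) n k := by
  unfold gegenbauerCt
  rw [← Finset.sum_subset (Finset.range_subset_range.2 (Nat.succ_le_of_lt hK))]
  · refine Finset.sum_congr rfl fun k hk => ?_
    rw [Finset.mem_range] at hk
    rw [geT, if_pos (by omega)]
  · intro k _ hk
    rw [Finset.mem_range] at hk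
    rw [geT, if_neg (by omega)]

lemma geT_rec_succ (l y : ℝ) (hl : 0 ≤ l) (n k : ℕ) :
    geT (l + 1) y (n + 2) (k + 1) - y * geT (l + 1) y (n + 1) (k + 1) + geT (l + 1) y n k
      = l * geT l y (n + 2) (k + 1) := by
  unfold geT
  by_cases h1 : 2 * k ≤ n
  · obtain ⟨r, rfl⟩ := Nat.exists_eq_add_of_le h1
    have hs : (0:ℝ) < l + k + r + 1 := by positivity
    have hG : Real.Gamma (l + k + r + 1 + 1) = (l + k + r + 1) * Real.Gamma (l + k + r + 1) :=
      Real.Gamma_add_one hs.ne'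
    have hc : 2 * (k + 1) ≤ 2 * k + r + 2 := by omega
    simp only [if_pos hc, if_pos h1]
    have e1 : 2 * k + r + 2 - 2 * (k + 1) = r := by omega
    have e2 : 2 * k + r - 2 * k = r := by omega
    rw [e1, e2]
    push_cast
    have a1 : l + 1 + (2 * (k:ℝ) + r + 2) - (k + 1) = l + k + r + 1 + 1 := by ring
    have a2 : l + 1 + (2 * (k:ℝ) + r) - k = l + k + r + 1 := by ring
    have a3 : l + (2 * (k:ℝ) + r + 2) - (k + 1) = l + k + r + 1 := by ring
    rw [a1, a2, a3, hG, Nat.factorial_succ]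
    have hk : (k.factorial : ℝ) ≠ 0 := by positivity
    rcases r with _ | r
    · rw [if_neg (by omega)]
      push_cast
      field_simp
      ring
    · rw [if_pos (by omega)]
      have e3 : 2 * k + (r + 1) + 1 - 2 * (k + 1) = r := by omega
      rw [e3, Nat.factorial_succ]
      have a4 : l + 1 + (2 * (k:ℝ) + (r + 1) + 1) - (k + 1) = l + k + (r + 1) + 1 := by ring
      push_cast at *
      rw [a4]
      have hr : (r.factorial : ℝ) ≠ 0 := by positivity
      field_simp
      ring
  · rw [if_neg (by omega), if_neg (by omega), if_neg h1, if_neg (by omega)]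
    simp

lemma geT_rec_zero (l y : ℝ) (hl : 0 ≤ l) (n : ℕ) :
    geT (l + 1) y (n + 1) 0 - y * geT (l + 1) y n 0
      = l * geT l y (n + 1) 0 := by
  unfold geT
  have hs : (0:ℝ) < l + n + 1 := by positivity
  have hG : Real.Gamma (l + n + 1 + 1) = (l + n + 1) * Real.Gamma (l + n + 1) :=
      Real.Gamma_add_one hs.ne'
  simp only [Nat.mul_zero, Nat.zero_le, if_true, Nat.sub_zero, Nat.factorial_succ]
  push_cast
  have a1 : l + 1 + ((n:ℝ) + 1) - 0 = l + n + 1 + 1 := by ring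
  have a2 : l + 1 + (n:ℝ) - 0 = l + n + 1 := by ring
  have a3 : l + ((n:ℝ) + 1) - 0 = l + n + 1 := by ring
  rw [a1, a2, a3, hG]
  have hr : (n.factorial : ℝ) ≠ 0 := by positivity
  field_simp
  ring

lemma ge_rec (l x : ℝ) (hl : 0 ≤ l) (n : ℕ) :
    gegenbauerCt (n + 2) (l + 1) x - 2 * x * gegenbauerCt (n + 1) (l + 1) x
      + gegenbauerCt n (l + 1) x = l * gegenbauerCt (n + 2) l x := by
  rw [ge_eq_sum (n + 2) (n + 2 + 1) (by omega), ge_eq_sum (n + 1) (n + 2 + 1) (by omega),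
    ge_eq_sum n (n + 2) (by omega), ge_eq_sum (n + 2) (n + 2 + 1) (by omega),
    Finset.sum_range_succ' _ (n + 2), Finset.sum_range_succ' _ (n + 2),
    Finset.sum_range_succ' _ (n + 2),
    mul_add, mul_add, Finset.mul_sum, Finset.mul_sum]
  have h0 := geT_rec_zero l (2 * x) hl (n + 1)
  rw [← h0]
  rw [← Finset.sum_congr rfl (fun k _ => geT_rec_succ l (2 * x) hl n k),
    Finset.sum_add_distrib, Finset.sum_sub_distrib]
  ring

lemma ge_zero (l x : ℝ) : gegenbauerCt 0 l x = Real.Gamma l := by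
  simp [gegenbauerCt]

lemma ge_one (l x : ℝ) : gegenbauerCt 1 l x = Real.Gamma (l + 1) * (2 * x) := by
  simp [gegenbauerCt]

lemma ge_neg (n : ℕ) (l x : ℝ) : gegenbauerCt n l (-x) = (-1) ^ n * gegenbauerCt n l x := by
  unfold gegenbauerCt
  rw [Finset.mul_sum]
  refine Finset.sum_congr rfl fun k hk => ?_
  rw [Finset.mem_range] at hk
  have h : (-1 : ℝ) ^ n = (-1) ^ (n - 2 * k) := by
    conv_lhs => rw [show n = (n - 2 * k) + 2 * k by omega, pow_add, pow_mul]
    simp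
  rw [h, show 2 * -x = (-1) * (2 * x) by ring, mul_pow]
  ring

/-- Generating series of the Gegenbauer polynomials. -/
noncomputable def geGen (N : ℕ) (x : ℝ) (w : ℂ) : PowerSeries ℂ :=
  PowerSeries.mk fun n => ((gegenbauerCt n N x : ℝ) : ℂ) * w ^ n

/-- The quadratic `1 - 2 x w t + w² t²`. -/
noncomputable def geQ (x : ℝ) (w : ℂ) : PowerSeries ℂ :=
  1 - PowerSeries.C (2 * (x : ℂ) * w) * PowerSeries.X + PowerSeries.C (w ^ 2) * PowerSeries.X ^ 2

lemma geQ_coeff_two (x : ℝ) (w : ℂ) (F : PowerSeries ℂ) (n : ℕ) :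
    PowerSeries.coeff (n + 2) (geQ x w * F) = PowerSeries.coeff (n + 2) F
      - 2 * x * w * PowerSeries.coeff (n + 1) F + w ^ 2 * PowerSeries.coeff n F := by
  have : geQ x w * F = F - PowerSeries.C (2 * (x : ℂ) * w) * (F * PowerSeries.X)
    + PowerSeries.C (w ^ 2) * (F * PowerSeries.X ^ 2) := by unfold geQ; ring
  rw [this]
  simp only [map_add, map_sub, PowerSeries.coeff_C_mul, PowerSeries.coeff_succ_mul_X,
    PowerSeries.coeff_mul_X_pow]

lemma geQ_coeff_one (x : ℝ) (w : ℂ) (F : PowerSeries ℂ) :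
    PowerSeries.coeff 1 (geQ x w * F) = PowerSeries.coeff 1 F
      - 2 * x * w * PowerSeries.coeff 0 F := by
  have : geQ x w * F = F - PowerSeries.C (2 * (x : ℂ) * w) * (F * PowerSeries.X)
    + PowerSeries.C (w ^ 2) * (F * PowerSeries.X ^ 2) := by unfold geQ; ring
  rw [this]
  simp only [map_add, map_sub, PowerSeries.coeff_C_mul, PowerSeries.coeff_mul_X_pow']
  have := PowerSeries.coeff_succ_mul_X 0 F
  simp at this ⊢

lemma geQ_coeff_zero (x : ℝ) (w : ℂ) (F : PowerSeries ℂ) :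
    PowerSeries.coeff 0 (geQ x w * F) = PowerSeries.coeff 0 F := by
  simp [geQ]

lemma geGen_step (N : ℕ) (hN : 1 ≤ N) (x : ℝ) (w : ℂ) :
    geQ x w * geGen (N + 1) x w = PowerSeries.C (N : ℂ) * geGen N x w := by
  have hN' : (0:ℝ) < N := by exact_mod_cast hN
  ext n
  rw [PowerSeries.coeff_C_mul]
  rcases n with _ | _ | n
  · rw [geQ_coeff_zero]
    simp only [geGen, PowerSeries.coeff_mk, ge_zero]
    push_cast
    rw [show (N:ℝ) + 1 = N + 1 from rfl, Real.Gamma_add_one hN'.ne']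
    push_cast; ring
  · rw [geQ_coeff_one]
    simp only [geGen, PowerSeries.coeff_mk, ge_zero, ge_one, zero_add]
    push_cast
    rw [Real.Gamma_add_one (by positivity), Real.Gamma_add_one hN'.ne']
    push_cast; ring
  · rw [geQ_coeff_two]
    simp only [geGen, PowerSeries.coeff_mk]
    have h := ge_rec N x hN'.le n
    have h' := congrArg (fun r : ℝ => (r : ℂ)) h
    push_cast at h' ⊢
    linear_combination w ^ (n + 2) * h'

lemma geGen_one (x : ℝ) (w : ℂ) : geQ x w * geGen 1 x w = 1 := by
  ext n
  rcases n with _ | _ | n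
  · rw [geQ_coeff_zero]
    simp [geGen, PowerSeries.coeff_mk, ge_zero]
  · rw [geQ_coeff_one]
    simp only [geGen, PowerSeries.coeff_mk, ge_zero, ge_one, zero_add]
    have : Real.Gamma (1 + 1) = 1 := by rw [Real.Gamma_add_one one_ne_zero]; simp
    simp [this, PowerSeries.coeff_one]
  · rw [geQ_coeff_two]
    simp only [geGen, PowerSeries.coeff_mk]
    have h := ge_rec 0 x le_rfl n
    have h' := congrArg (fun r : ℝ => (r : ℂ)) h
    simp only [zero_add, zero_mul] at h'
    push_cast at h' ⊢
    rw [PowerSeries.coeff_one, if_neg (by omega)]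
    linear_combination w ^ (n + 2) * h'

lemma geGen_pow (N : ℕ) (x : ℝ) (w : ℂ) :
    geQ x w ^ (N + 1) * geGen (N + 1) x w = PowerSeries.C (N.factorial : ℂ) := by
  induction N with
  | zero => simpa using geGen_one x w
  | succ N ih =>
    rw [pow_succ, mul_assoc, geGen_step _ (by omega), Nat.factorial_succ]
    calc _ = PowerSeries.C ((N + 1 : ℕ) : ℂ) * (geQ x w ^ (N + 1) * geGen (N + 1) x w) := by ring
      _ = _ := by rw [ih]; push_cast; rw [map_mul]

/-! Chebyshev case -/
lemma geT_cheb (y : ℝ) (n k : ℕ) :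
    geT 1 y (n + 2) (k + 1) - geT 1 y n k = (n + 2) * geT 0 y (n + 2) (k + 1) := by
  unfold geT
  by_cases h1 : 2 * k ≤ n
  · obtain ⟨r, rfl⟩ := Nat.exists_eq_add_of_le h1
    have hs : (0:ℝ) < k + r + 1 := by positivity
    have hG : Real.Gamma (k + r + 1 + 1) = (k + r + 1) * Real.Gamma (k + r + 1) :=
      Real.Gamma_add_one hs.ne'
    rw [if_pos (by omega), if_pos h1, if_pos (by omega)]
    have e1 : 2 * k + r + 2 - 2 * (k + 1) = r := by omega
    have e2 : 2 * k + r - 2 * k = r := by omega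
    rw [e1, e2]
    push_cast
    have a1 : 1 + (2 * (k:ℝ) + r + 2) - (k + 1) = k + r + 1 + 1 := by ring
    have a2 : 1 + (2 * (k:ℝ) + r) - k = k + r + 1 := by ring
    have a3 : 0 + (2 * (k:ℝ) + r + 2) - (k + 1) = k + r + 1 := by ring
    rw [a1, a2, a3, hG, Nat.factorial_succ]
    push_cast
    have hk : (k.factorial : ℝ) ≠ 0 := by positivity
    have hr : (r.factorial : ℝ) ≠ 0 := by positivity
    field_simp
    ring
  · rw [if_neg (by omega), if_neg h1, if_neg (by omega)]
    simp

lemma geT_cheb_zero (y : ℝ) (n : ℕ) :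
    geT 1 y (n + 2) 0 = (n + 2) * geT 0 y (n + 2) 0 := by
  unfold geT
  have hs : (0:ℝ) < n + 2 := by positivity
  have hG : Real.Gamma (n + 2 + 1) = (n + 2) * Real.Gamma (n + 2) :=
      Real.Gamma_add_one hs.ne'
  simp only [Nat.mul_zero, Nat.zero_le, if_true, Nat.sub_zero]
  push_cast
  have a1 : 1 + ((n:ℝ) + 2) - 0 = n + 2 + 1 := by ring
  have a3 : 0 + ((n:ℝ) + 2) - 0 = n + 2 := by ring
  rw [a1, a3, hG]
  ring

lemma ge_cheb (x : ℝ) (n : ℕ) :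
    gegenbauerCt (n + 2) 1 x - gegenbauerCt n 1 x = (n + 2) * gegenbauerCt (n + 2) 0 x := by
  rw [ge_eq_sum (n + 2) (n + 2 + 1) (by omega),
    ge_eq_sum n (n + 2) (by omega), ge_eq_sum (n + 2) (n + 2 + 1) (by omega),
    Finset.sum_range_succ' _ (n + 2), Finset.sum_range_succ' _ (n + 2),
    mul_add, Finset.mul_sum, ← geT_cheb_zero,
    ← Finset.sum_congr rfl (fun k _ => geT_cheb (2 * x) n k), Finset.sum_sub_distrib]
  ring

lemma ge_one_cos (φ : ℝ) (n : ℕ) :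
    gegenbauerCt (n + 1) 1 (Real.cos φ) - Real.cos φ * gegenbauerCt n 1 (Real.cos φ)
      = Real.cos ((n + 1) * φ) ∧
    Real.sin φ ^ 2 * gegenbauerCt n 1 (Real.cos φ) = Real.sin φ * Real.sin ((n + 1) * φ) := by
  have G2 : Real.Gamma (1 + 1) = 1 := by rw [Real.Gamma_add_one one_ne_zero]; simp
  induction n with
  | zero =>
    simp only [zero_add, ge_zero, ge_one, G2, Real.Gamma_one, Nat.cast_zero]
    constructor
    · simp; ring
    · simp; ring
  | succ n ih =>
    obtain ⟨h1, h2⟩ := ih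
    have h := ge_rec 0 (Real.cos φ) le_rfl n
    simp only [zero_add, zero_mul] at h
    have e : ((n + 1 : ℕ) + 1 : ℝ) * φ = (n + 1) * φ + φ := by push_cast; ring
    rw [e, Real.cos_add, Real.sin_add]
    have hs := Real.sin_sq_add_cos_sq φ
    constructor
    · linear_combination h + Real.cos φ * h1 - h2 + gegenbauerCt n 1 (Real.cos φ) * hs
    · linear_combination Real.sin φ ^ 2 * h1 + Real.cos φ * h2

lemma ge_zero_cos (φ : ℝ) (n : ℕ) :
    (n + 1) * gegenbauerCt (n + 1) 0 (Real.cos φ) = 2 * Real.cos ((n + 1) * φ) := by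
  rcases n with _ | n
  · simp [ge_one]
  · have h := ge_cheb (Real.cos φ) n
    have h1 := (ge_one_cos φ (n + 1)).1
    have h2 := ge_rec 0 (Real.cos φ) le_rfl n
    simp only [zero_add, zero_mul] at h2
    push_cast at *
    linear_combination -h + 2 * h1 - h2


/-- Coefficients of the normalized Bessel function of order `N - 1/2`. -/
noncomputable def bC (N m : ℕ) : ℝ := (-1) ^ m / (m.factorial * Real.Gamma (m + N + 1 / 2))

lemma Gamma_half_ge (k : ℕ) : (1 / 2 : ℝ) ≤ Real.Gamma (k + 1 / 2) := by
  have hpi : (1:ℝ) ≤ √π := by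
    rw [Real.one_le_sqrt]; linarith [Real.pi_gt_three]
  rcases k with _ | k
  · simp only [Nat.cast_zero, zero_add, Real.Gamma_one_half_eq]; linarith
  · induction k with
    | zero =>
      have : Real.Gamma (1 / 2 + 1) = 1 / 2 * Real.Gamma (1 / 2) :=
        Real.Gamma_add_one (by norm_num)
      rw [Real.Gamma_one_half_eq] at this
      have e : (((0 + 1 : ℕ) : ℝ) + 1 / 2) = 1 / 2 + 1 := by norm_num
      rw [e, this]; linarith
    | succ k ih =>
      have e : (((k + 1 + 1 : ℕ) : ℝ) + 1 / 2) = ((k + 1 : ℕ) + 1 / 2) + 1 := by push_cast; ring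
      rw [e, Real.Gamma_add_one (by positivity)]
      have : (1:ℝ) ≤ ((k + 1 : ℕ) + 1 / 2) := by push_cast; linarith [Nat.cast_nonneg (α := ℝ) k]
      nlinarith

lemma bC_abs (N m : ℕ) : |bC N m| ≤ 2 / m.factorial := by
  have h := Gamma_half_ge (m + N)
  push_cast at h
  unfold bC
  rw [abs_div, abs_pow, abs_neg, abs_one, one_pow, abs_of_pos (by positivity)]
  have hm : (0:ℝ) < m.factorial := by positivity
  rw [div_le_div_iff₀ (by positivity) hm]
  nlinarith

lemma bC_succ (N m : ℕ) : (m + 1) * bC N (m + 1) = - bC (N + 1) m := by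
  unfold bC
  rw [Nat.factorial_succ]
  have e : ((m + 1 : ℕ) : ℝ) + N + 1 / 2 = m + (N + 1 : ℕ) + 1 / 2 := by push_cast; ring
  rw [e]
  have h := Gamma_half_ge (m + (N + 1))
  have hm : (0:ℝ) < m.factorial := by positivity
  have hG : Real.Gamma (m + (N + 1 : ℕ) + 1 / 2) ≠ 0 := by
    have e : (m : ℝ) + (N + 1 : ℕ) + 1 / 2 = ((m + (N + 1) : ℕ) : ℝ) + 1 / 2 := by push_cast; ring
    rw [e]; linarith
  push_cast at *
  field_simp
  ring

lemma bC_rec_zero (N : ℕ) : (N + 1 / 2) * bC (N + 1) 0 = bC N 0 := by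
  unfold bC
  have hG : Real.Gamma (N + 1 / 2) ≠ 0 := by have := Gamma_half_ge N; linarith
  have e : ((0 : ℕ) : ℝ) + (N + 1 : ℕ) + 1 / 2 = (N + 1 / 2) + 1 := by push_cast; ring
  have e' : ((0 : ℕ) : ℝ) + N + 1 / 2 = N + 1 / 2 := by push_cast; ring
  rw [e, e', Real.Gamma_add_one (by positivity)]
  have : (N + 1 / 2 : ℝ) ≠ 0 := by positivity
  field_simp

lemma bC_rec_succ (N m : ℕ) :
    (N + 1 / 2) * bC (N + 1) (m + 1) = bC N (m + 1) + bC (N + 2) m := by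
  have h1 := bC_succ (N + 1) m
  have h2 : bC (N + 1) (m + 1) * (m + 1 + N + 1 / 2) = bC N (m + 1) := by
    unfold bC
    have hG : Real.Gamma ((m + 1 : ℕ) + N + 1 / 2) ≠ 0 := by
      have := Gamma_half_ge ((m + 1) + N); push_cast at *; linarith
    have e : ((m + 1 : ℕ) : ℝ) + (N + 1 : ℕ) + 1 / 2 = ((m + 1 : ℕ) + N + 1 / 2) + 1 := by
      push_cast; ring
    rw [e, Real.Gamma_add_one (by positivity)]
    have : ((m : ℝ) + 1 + N + 1 / 2 : ℝ) ≠ 0 := by positivity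
    push_cast at *
    field_simp
  linear_combination h2 - h1

lemma bC_summable (N : ℕ) (z : ℝ) : Summable fun m => bC N m * z ^ m := by
  refine Summable.of_norm_bounded (g := fun m => 2 * (|z| ^ m / m.factorial))
    ((Real.summable_pow_div_factorial _).mul_left 2) fun m => ?_
  rw [Real.norm_eq_abs, abs_mul, abs_pow]
  calc _ ≤ 2 / (m.factorial : ℝ) * |z| ^ m := by gcongr; exact bC_abs N m
    _ = _ := by ring

/-- The object `∑ (-1)^m z^m / (m! Γ(m+N+1/2))`. -/
noncomputable def bphi (N : ℕ) (z : ℝ) : ℝ := ∑' m, bC N m * z ^ m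

lemma bphi_deriv (N : ℕ) (z : ℝ) : HasDerivAt (bphi N) (- bphi (N + 1) z) z := by
  have key : HasDerivAt (bphi N) (∑' m : ℕ, bC N m * (m * z ^ (m - 1))) z := by
    have hb : Summable fun m : ℕ => (2 / (m.factorial : ℝ)) * (m * (|z| + 1) ^ (m - 1)) := by
      rw [← summable_nat_add_iff 1]
      refine ((Real.summable_pow_div_factorial (|z| + 1)).mul_left 2).congr fun m => ?_
      rw [Nat.factorial_succ]
      have hm : (m.factorial : ℝ) ≠ 0 := by positivity
      have hm1 : ((m : ℝ) + 1) ≠ 0 := by positivity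
      push_cast
      field_simp
    refine hasDerivAt_tsum_of_isPreconnected hb (t := Metric.ball 0 (|z| + 1)) Metric.isOpen_ball
      (convex_ball _ _).isPreconnected (g := fun m y => bC N m * y ^ m)
      (g' := fun m y => bC N m * (m * y ^ (m - 1))) (y₀ := 0) ?_ ?_ ?_ ?_ ?_
    · intro m y _
      exact (hasDerivAt_pow m y).const_mul _
    · intro m y hy
      rw [mem_ball_zero_iff, Real.norm_eq_abs] at hy
      rw [Real.norm_eq_abs, abs_mul, abs_mul, abs_pow, Nat.abs_cast]
      gcongr
      exact bC_abs N m
    · simp; positivity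
    · exact bC_summable N 0
    · simp
  convert key using 1
  rw [Summable.tsum_eq_zero_add]
  · simp only [bphi, Nat.cast_zero, zero_mul, mul_zero, zero_add, ← tsum_neg]
    refine tsum_congr fun m => ?_
    have := bC_succ N m
    push_cast
    linear_combination -z ^ m * this
  · rw [← summable_nat_add_iff 1]
    refine (bC_summable (N + 1) z).neg.congr fun m => ?_
    have := bC_succ N m
    push_cast
    linear_combination -z ^ m * this

lemma bphi_rec (N : ℕ) (z : ℝ) :
    (N + 1 / 2) * bphi (N + 1) z = bphi N z + z * bphi (N + 2) z := by
  unfold bphi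
  rw [(bC_summable (N + 1) z).tsum_eq_zero_add, (bC_summable N z).tsum_eq_zero_add, mul_add,
    ← tsum_mul_left, ← tsum_mul_left, add_assoc, ← Summable.tsum_add]
  · congr 1
    · have := bC_rec_zero N; simp only [pow_zero, mul_one]; exact this
    · refine tsum_congr fun m => ?_
      linear_combination z ^ (m + 1) * bC_rec_succ N m
  · exact (summable_nat_add_iff 1).2 (bC_summable N z)
  · exact (bC_summable (N + 2) z).mul_left z

lemma bC_zero_cos (m : ℕ) : bC 0 m / 4 ^ m = (-1) ^ m / ((2 * m).factorial * √π) := by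
  have h : Real.Gamma (m + 1 / 2) * m.factorial * 4 ^ m = √π * (2 * m).factorial := by
    induction m with
    | zero => simp; rw [← Real.Gamma_one_half_eq]; norm_num
    | succ m ih =>
      have e : (((m + 1 : ℕ) : ℝ) + 1 / 2) = (m + 1 / 2) + 1 := by push_cast; ring
      rw [e, Real.Gamma_add_one (by positivity), show 2 * (m + 1) = 2 * m + 1 + 1 by ring,
        Nat.factorial_succ, Nat.factorial_succ, Nat.factorial_succ]
      push_cast
      linear_combination ((m:ℝ) + 1 / 2) * (m + 1) * 4 * ih
  unfold bC
  have hG : Real.Gamma (m + 1 / 2) ≠ 0 := by have := Gamma_half_ge m; linarith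
  have e : (m : ℝ) + (0 : ℕ) + 1 / 2 = m + 1 / 2 := by simp
  rw [e]
  have hp : √π ≠ 0 := by positivity
  have hm : (m.factorial : ℝ) ≠ 0 := by positivity
  have hm2 : ((2 * m).factorial : ℝ) ≠ 0 := by positivity
  rw [div_div, div_eq_div_iff (by positivity) (by positivity)]
  linear_combination -(-1) ^ m * h

lemma bphi_zero (x : ℝ) : bphi 0 (x ^ 2 / 4) = Real.cos x / √π := by
  rw [Real.cos_eq_tsum, ← tsum_div_const]
  unfold bphi
  refine tsum_congr fun m => ?_
  have := bC_zero_cos m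
  rw [div_pow, ← pow_mul]
  calc _ = bC 0 m / 4 ^ m * x ^ (2 * m) := by ring
    _ = _ := by rw [this]; field_simp

lemma besselJt_eq (N : ℕ) (α x : ℝ) (h : α + 1 = N + 1 / 2) :
    besselJt α x = bphi N (x ^ 2 / 4) := by
  unfold besselJt bphi
  refine tsum_congr fun m => ?_
  unfold bC
  rw [add_assoc, h, pow_mul, add_assoc]
  congr 2
  ring

/-- The object `J̃_{N-1/2}(a x)`. -/
noncomputable def bJ (N : ℕ) (a x : ℝ) : ℝ := bphi N ((a * x) ^ 2 / 4)

lemma bJ_deriv (N : ℕ) (a x : ℝ) :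
    HasDerivAt (bJ N a) (- (a ^ 2 * x / 2) * bJ (N + 1) a x) x := by
  have h1 : HasDerivAt (fun x => (a * x) ^ 2 / 4) (a ^ 2 * x / 2) x := by
    have := ((((hasDerivAt_id x).const_mul a).pow 2).div_const 4)
    refine this.congr_deriv ?_
    simp; ring
  have := (bphi_deriv N ((a * x) ^ 2 / 4)).comp x h1
  refine this.congr_deriv ?_
  unfold bJ; ring

lemma bJ_rec (N : ℕ) (a x : ℝ) :
    (N + 1 / 2) * bJ (N + 1) a x = bJ N a x + (a * x) ^ 2 / 4 * bJ (N + 2) a x :=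
  bphi_rec N _

/-- The object `f_{N+1}(x) = x^{2N+1} J̃_{N+1/2}(ax)`. -/
noncomputable def bF (N : ℕ) (a x : ℝ) : ℝ := x ^ (2 * N + 1) * bJ (N + 1) a x

lemma bF_deriv (N : ℕ) (a x : ℝ) : HasDerivAt (bF N a) (2 * x ^ (2 * N) * bJ N a x) x := by
  have := (hasDerivAt_pow (2 * N + 1) x).mul (bJ_deriv (N + 1) a x)
  refine this.congr_deriv ?_
  have h := bJ_rec N a x
  simp only [Nat.add_sub_cancel]
  push_cast
  linear_combination 2 * x ^ (2 * N) * h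

lemma bF_deriv2 (N : ℕ) (a x : ℝ) : HasDerivAt (fun x => 2 * x ^ (2 * N) * bJ N a x)
    (4 * N * bF (N - 1) a x - a ^ 2 * bF N a x) x := by
  have := ((hasDerivAt_pow (2 * N) x).const_mul 2).mul (bJ_deriv N a x)
  refine this.congr_deriv ?_
  unfold bF
  rcases N with _ | N
  · simp; ring
  · rw [show 2 * (N + 1) - 1 = 2 * N + 1 by omega, show N + 1 - 1 = N by omega]
    push_cast
    ring

lemma bJ_cont (N : ℕ) (a : ℝ) : Continuous (bJ N a) :=
  continuous_iff_continuousAt.2 fun x => (bJ_deriv N a x).continuousAt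

lemma bJ_bound (N : ℕ) (a : ℝ) : ∃ C, ∀ x, 0 < x → |bJ N a x| ≤ C := by
  induction N with
  | zero =>
    refine ⟨1 / √π, fun x _ => ?_⟩
    rw [bJ, bphi_zero, abs_div, abs_of_pos (show 0 < √π by positivity)]
    gcongr
    exact Real.abs_cos_le_one _
  | succ N ih =>
    obtain ⟨C, hC⟩ := ih
    refine ⟨2 * C, fun x hx => ?_⟩
    have h : ‖bF N a x - bF N a 0‖ ≤ (2 * x ^ (2 * N) * C) * ‖x - 0‖ := by
      refine (convex_Icc 0 x).norm_image_sub_le_of_norm_hasDerivWithin_le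
        (f' := fun x => 2 * x ^ (2 * N) * bJ N a x)
        (fun y _ => (bF_deriv N a y).hasDerivWithinAt) ?_ (left_mem_Icc.2 hx.le)
        (right_mem_Icc.2 hx.le)
      intro y hy
      have hCy : |bJ N a y| ≤ C := by
        rcases eq_or_lt_of_le hy.1 with h0 | h0
        · rw [← h0]
          refine le_of_tendsto (f := fun y => |bJ N a y|) (x := nhdsWithin 0 (Ioi 0)) ?_ ?_
          · exact ((bJ_cont N a).abs.tendsto 0).mono_left nhdsWithin_le_nhds
          · filter_upwards [self_mem_nhdsWithin] with y hy using hC y hy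
        · exact hC y h0
      have hy0 := hy.1
      rw [Real.norm_eq_abs, abs_mul, abs_of_nonneg (by positivity)]
      have := hy.2
      have hC0 : 0 ≤ C := (abs_nonneg _).trans hCy
      gcongr
    have h0 : bF N a 0 = 0 := by simp [bF]
    rw [h0, sub_zero, sub_zero, Real.norm_eq_abs, Real.norm_eq_abs, abs_of_pos hx, bF, abs_mul,
      abs_of_pos (by positivity)] at h
    have hp : 0 < x ^ (2 * N + 1) := by positivity
    refine le_of_mul_le_mul_left (h.trans (le_of_eq ?_)) hp
    ring


/-- The function `x^k e^{-px}`. -/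
noncomputable def lE (p : ℂ) (k : ℕ) (x : ℝ) : ℂ := (x : ℂ) ^ k * Complex.exp (-p * x)

lemma lE_norm (p : ℂ) (hp : p.re = 1) (k : ℕ) (x : ℝ) (hx : 0 ≤ x) :
    ‖lE p k x‖ = x ^ k * Real.exp (-x) := by
  rw [lE, norm_mul, norm_pow, Complex.norm_real, Real.norm_of_nonneg hx, Complex.norm_exp]
  simp [hp]

lemma lE_deriv (p : ℂ) (k : ℕ) (x : ℝ) :
    HasDerivAt (lE p k) (k * lE p (k - 1) x - p * lE p k x) x := by
  have h1 : HasDerivAt (fun x : ℝ => (x : ℂ) ^ k) (k * (x : ℂ) ^ (k - 1)) x :=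
    (hasDerivAt_pow k (x : ℂ)).comp_ofReal
  have h2 : HasDerivAt (fun x : ℝ => Complex.exp (-p * x)) (Complex.exp (-p * x) * (-p)) x := by
    have : HasDerivAt (fun z : ℂ => Complex.exp (-p * z)) (Complex.exp (-p * x) * (-p)) (x : ℂ) := by
      have := ((hasDerivAt_id (x : ℂ)).const_mul (-p)).cexp
      simpa using this
    exact this.comp_ofReal
  refine (h1.mul h2).congr_deriv ?_
  unfold lE
  ring

lemma lE_cont (p : ℂ) (k : ℕ) : Continuous (lE p k) :=
  continuous_iff_continuousAt.2 fun x => (lE_deriv p k x).continuousAt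

lemma integrable_pow_exp (n : ℕ) : IntegrableOn (fun x : ℝ => x ^ n * Real.exp (-x)) (Ioi 0) := by
  have := Real.GammaIntegral_convergent (s := (n : ℝ) + 1) (by positivity)
  refine this.congr_fun (fun x _ => ?_) measurableSet_Ioi
  simp [mul_comm]

lemma bF_cont (N : ℕ) (a : ℝ) : Continuous (bF N a) :=
  continuous_iff_continuousAt.2 fun x => (bF_deriv N a x).continuousAt

lemma lE_bF_integrable (p : ℂ) (hp : p.re = 1) (k N : ℕ) (a : ℝ) :
    IntegrableOn (fun x : ℝ => lE p k x * (bF N a x : ℂ)) (Ioi 0) := by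
  obtain ⟨C, hC⟩ := bJ_bound (N + 1) a
  refine Integrable.mono' ((integrable_pow_exp (k + (2 * N + 1))).const_mul C) ?_ ?_
  · exact ((lE_cont p k).mul (Complex.continuous_ofReal.comp (bF_cont N a))).aestronglyMeasurable
  · refine (ae_restrict_iff' measurableSet_Ioi).2 (Eventually.of_forall fun x hx => ?_)
    have hx : 0 < x := hx
    rw [norm_mul, lE_norm p hp k x hx.le, Complex.norm_real, bF, Real.norm_eq_abs, abs_mul,
      abs_of_pos (by positivity)]
    calc _ ≤ x ^ k * Real.exp (-x) * (x ^ (2 * N + 1) * C) := by gcongr; exact hC x hx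
      _ = _ := by ring

lemma lE_tendsto (p : ℂ) (hp : p.re = 1) (k n N : ℕ) (a : ℝ) :
    Tendsto (fun x : ℝ => lE p k x * ((x ^ n * bJ N a x : ℝ) : ℂ)) atTop (nhds 0) := by
  obtain ⟨C, hC⟩ := bJ_bound N a
  have h := (Real.tendsto_pow_mul_exp_neg_atTop_nhds_zero (k + n)).const_mul C
  rw [mul_zero] at h
  refine squeeze_zero_norm' ?_ h
  filter_upwards [eventually_gt_atTop 0] with x hx
  rw [norm_mul, lE_norm p hp k x hx.le, Complex.norm_real, Real.norm_eq_abs, abs_mul,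
      abs_of_pos (by positivity)]
  calc _ ≤ x ^ k * Real.exp (-x) * (x ^ n * C) := by gcongr; exact hC x hx
      _ = _ := by ring

/-- Moments. -/
noncomputable def lM (p : ℂ) (a : ℝ) (N k : ℕ) : ℂ :=
  ∫ x in Ioi (0 : ℝ), lE p k x * (bF N a x : ℂ)

lemma lM_rec (p : ℂ) (hp : p.re = 1) (a : ℝ) (N k : ℕ) :
    (p ^ 2 + a ^ 2) * lM p a N k - 2 * p * k * lM p a N (k - 1)
      + k * (k - 1 : ℕ) * lM p a N (k - 2)
    = 4 * N * lM p a (N - 1) k + 0 ^ k * 0 ^ (2 * N) * (2 / (√π : ℝ) : ℂ) := by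
  set E := lE p k with hE
  set E1 : ℝ → ℂ := fun x => k * lE p (k - 1) x - p * lE p k x with hE1
  set g : ℝ → ℂ := fun x => (bF N a x : ℂ) with hg
  set g1 : ℝ → ℂ := fun x => ((2 * x ^ (2 * N) * bJ N a x : ℝ) : ℂ) with hg1
  set Psi : ℝ → ℂ := fun x => E x * g1 x - E1 x * g x with hPsi
  have dE : ∀ x, HasDerivAt E (E1 x) x := fun x => lE_deriv p k x
  have dE1 : ∀ x, HasDerivAt E1 (k * ((k - 1 : ℕ) * lE p (k - 2) x - p * lE p (k - 1) x)
      - p * (k * lE p (k - 1) x - p * lE p k x)) x := fun x =>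
    ((lE_deriv p (k - 1) x).const_mul _).sub ((lE_deriv p k x).const_mul _)
  have dg : ∀ x, HasDerivAt g (g1 x) x := fun x => (bF_deriv N a x).ofReal_comp
  have dg1 : ∀ x, HasDerivAt g1 ((4 * N * bF (N - 1) a x - a ^ 2 * bF N a x : ℝ) : ℂ) x :=
    fun x => (bF_deriv2 N a x).ofReal_comp
  have dPsi : ∀ x, HasDerivAt Psi (4 * N * (lE p k x * bF (N - 1) a x)
     - (p ^ 2 + a ^ 2) * (lE p k x * bF N a x) + 2 * p * k * (lE p (k - 1) x * bF N a x)
      - k * (k - 1 : ℕ) * (lE p (k - 2) x * bF N a x)) x := by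
    intro x
    refine (((dE x).mul (dg1 x)).sub ((dE1 x).mul (dg x))).congr_deriv ?_
    simp only [hE, hE1, hg, hg1]
    push_cast
    ring
  have i1 := (lE_bF_integrable p hp k (N - 1) a).const_mul (4 * N : ℂ)
  have i2 := (lE_bF_integrable p hp k N a).const_mul (p ^ 2 + a ^ 2 : ℂ)
  have i3 := (lE_bF_integrable p hp (k - 1) N a).const_mul (2 * p * k : ℂ)
  have i4 := (lE_bF_integrable p hp (k - 2) N a).const_mul (k * (k - 1 : ℕ) : ℂ)
  have ht : Tendsto Psi atTop (nhds 0) := by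
    have t1 := (lE_tendsto p hp k (2 * N) N a).const_mul (2 : ℂ)
    have t2 := (lE_tendsto p hp (k - 1) (2 * N + 1) (N + 1) a).const_mul (k : ℂ)
    have t3 := (lE_tendsto p hp k (2 * N + 1) (N + 1) a).const_mul p
    have := (t1.sub t2).add t3
    simp only [mul_zero, sub_zero, add_zero] at this
    refine this.congr fun x => ?_
    simp only [hPsi, hE, hE1, hg, hg1, bF]
    push_cast
    ring
  have := integral_Ioi_of_hasDerivAt_of_tendsto (a := (0 : ℝ)) (f := Psi)
    (dPsi 0).continuousAt.continuousWithinAt (fun x _ => dPsi x) (((i1.sub i2).add i3).sub i4) ht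
  rw [integral_sub (by exact (i1.sub i2).add i3) i4, integral_add (by exact i1.sub i2) i3,
    integral_sub i1 i2,
    integral_const_mul, integral_const_mul, integral_const_mul, integral_const_mul] at this
  have hb : bJ 0 a 0 = 1 / √π := by
    rw [bJ, bphi_zero]; simp
  have h0 : Psi 0 = 0 ^ k * 0 ^ (2 * N) * (2 / (√π : ℝ) : ℂ) := by
    simp only [hPsi, hE, hE1, hg, hg1, bF, lE]
    rcases N with _ | N
    · rw [hb]; push_cast; simp; left; ring
    · simp
  rw [h0] at this
  unfold lM
  linear_combination -this

/-- Generating series of the moments. -/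
noncomputable def lP (p : ℂ) (a : ℝ) (N : ℕ) : PowerSeries ℂ :=
  PowerSeries.mk fun k => (-1) ^ k / (k.factorial : ℂ) * lM p a N k

/-- The object `(p+s)^2+a^2`. -/
noncomputable def lQ (p : ℂ) (a : ℝ) : PowerSeries ℂ :=
  (PowerSeries.C p + PowerSeries.X) ^ 2 + PowerSeries.C ((a : ℂ) ^ 2)

lemma lQ_mul (p : ℂ) (a : ℝ) (F : PowerSeries ℂ) :
    lQ p a * F = PowerSeries.C (p ^ 2 + (a:ℂ) ^ 2) * F + PowerSeries.C (2 * p) * (F * PowerSeries.X)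
      + F * PowerSeries.X ^ 2 := by
  unfold lQ
  simp only [map_add, map_mul, map_pow, map_ofNat]
  ring

lemma lP_rec (p : ℂ) (hp : p.re = 1) (a : ℝ) (N : ℕ) :
    lQ p a * lP p a N = PowerSeries.C (4 * N : ℂ) * lP p a (N - 1)
      + PowerSeries.C (0 ^ (2 * N) * (2 / (√π : ℝ) : ℂ)) := by
  ext k
  rw [lQ_mul]
  have h := lM_rec p hp a N k
  generalize hq : (p ^ 2 + (a:ℂ) ^ 2) = q at h ⊢
  rw [map_add, map_add, map_add, PowerSeries.coeff_C_mul, PowerSeries.coeff_C_mul,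
    PowerSeries.coeff_C_mul, PowerSeries.coeff_C]
  rcases k with _ | _ | k
  · rw [PowerSeries.coeff_zero_mul_X, PowerSeries.coeff_mul_X_pow', if_neg (by omega), if_pos rfl]
    simp only [lP, PowerSeries.coeff_mk]
    simp at h ⊢
    linear_combination h
  · rw [PowerSeries.coeff_succ_mul_X, PowerSeries.coeff_mul_X_pow', if_neg (by omega),
      if_neg (by omega)]
    simp only [lP, PowerSeries.coeff_mk]
    simp at h ⊢
    linear_combination -h
  · have hX2 : PowerSeries.coeff (k + 1 + 1) (lP p a N * PowerSeries.X ^ 2)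
        = PowerSeries.coeff k (lP p a N) := PowerSeries.coeff_mul_X_pow (lP p a N) 2 k
    rw [PowerSeries.coeff_succ_mul_X, hX2, if_neg (by omega)]
    simp only [lP, PowerSeries.coeff_mk]
    rw [show k + 1 + 1 - 1 = k + 1 by omega, show k + 1 + 1 - 2 = k by omega] at h
    rw [Nat.factorial_succ (k + 1), Nat.factorial_succ k]
    have hk : (k.factorial : ℂ) ≠ 0 := by exact_mod_cast k.factorial_ne_zero
    have hk1 : (k : ℂ) + 1 ≠ 0 := by exact_mod_cast k.succ_ne_zero
    have hk2 : (k : ℂ) + 1 + 1 ≠ 0 := by exact_mod_cast (k + 1).succ_ne_zero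
    simp only [zero_pow (Nat.succ_ne_zero (k + 1)), zero_mul, add_zero] at h
    push_cast at h ⊢
    field_simp
    linear_combination (-1) ^ k * h

lemma lP_pow (p : ℂ) (hp : p.re = 1) (a : ℝ) (N : ℕ) :
    lQ p a ^ (N + 1) * lP p a N = PowerSeries.C (4 ^ N * N.factorial * (2 / (√π : ℝ)) : ℂ) := by
  induction N with
  | zero => simpa using lP_rec p hp a 0
  | succ N ih =>
    rw [pow_succ, mul_assoc, lP_rec p hp]
    have e : (0:ℂ) ^ (2 * (N + 1)) = 0 := by simp
    rw [e, zero_mul, map_zero, add_zero, Nat.add_sub_cancel]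
    calc _ = PowerSeries.C (4 * (N + 1 : ℕ) : ℂ) * (lQ p a ^ (N + 1) * lP p a N) := by ring
      _ = _ := by
        rw [ih, ← map_mul, Nat.factorial_succ]; congr 1; push_cast; ring


/-- The object `1/(1-t)`. -/
noncomputable def fG : PowerSeries ℂ := PowerSeries.mk 1

lemma fG_mul : fG * (1 - PowerSeries.X) = 1 := PowerSeries.mk_one_mul_one_sub_eq_one ℂ

/-- The object `2t/(1-t)`. -/
noncomputable def fs : PowerSeries ℂ := PowerSeries.C 2 * PowerSeries.X * fG

lemma fs_hasSubst : PowerSeries.HasSubst fs :=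
  PowerSeries.HasSubst.of_constantCoeff_zero' (by simp [fs])

lemma fG_pow_coeff (d n : ℕ) :
    PowerSeries.coeff n (fG ^ (d + 1)) = ((d + n).choose d : ℂ) := by
  unfold fG
  rw [PowerSeries.mk_one_pow_eq_mk_choose_add, PowerSeries.coeff_mk]

/-- Substitution `s = 2t/(1-t)`. -/
noncomputable def fSub : PowerSeries ℂ →ₐ[ℂ] PowerSeries ℂ := PowerSeries.substAlgHom fs_hasSubst

lemma fSub_X : fSub PowerSeries.X = fs := PowerSeries.substAlgHom_X fs_hasSubst

lemma fSub_C (c : ℂ) : fSub (PowerSeries.C c) = PowerSeries.C c := fSub.commutes c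

lemma fSub_coe (p : Polynomial ℂ) : fSub (p : PowerSeries ℂ) = Polynomial.aeval fs p :=
  PowerSeries.substAlgHom_coe fs_hasSubst p

lemma f_coeff (d : ℕ) (P : PowerSeries ℂ) (j : ℕ) :
    PowerSeries.coeff j (fG ^ (d + 1) * fSub P)
      = ∑ k ∈ Finset.range (j + 1), 2 ^ k * ((j + d).choose (d + k) : ℂ)
          * PowerSeries.coeff k P := by
  have hP := PowerSeries.eq_X_pow_mul_shift_add_trunc (j + 1) P
  set R : PowerSeries ℂ := PowerSeries.mk fun i ↦ PowerSeries.coeff (i + (j + 1)) P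
  have h1 : fSub P = fs ^ (j + 1) * fSub R
      + ∑ k ∈ Finset.range (j + 1), PowerSeries.C (PowerSeries.coeff k P) * fs ^ k := by
    conv_lhs => rw [hP]
    rw [map_add, map_mul, map_pow, fSub_X, fSub_coe]
    congr 1
    have ht : PowerSeries.trunc (j + 1) P
        = ∑ k ∈ Finset.range (j + 1), Polynomial.monomial k (PowerSeries.coeff k P) := by
      ext n
      simp [PowerSeries.coeff_trunc, Polynomial.finsetSum_coeff, Polynomial.coeff_monomial]
    rw [ht, map_sum]
    refine Finset.sum_congr rfl fun k _ => ?_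
    rw [Polynomial.aeval_monomial]
    rfl
  rw [h1, mul_add, map_add, Finset.mul_sum, map_sum]
  have h2 : PowerSeries.coeff j (fG ^ (d + 1) * (fs ^ (j + 1) * fSub R)) = 0 := by
    have : fG ^ (d + 1) * (fs ^ (j + 1) * fSub R)
      = (fG ^ (d + 1) * PowerSeries.C 2 ^ (j + 1) * fG ^ (j + 1) * fSub R)
        * PowerSeries.X ^ (j + 1) := by unfold fs; ring
    rw [this, PowerSeries.coeff_mul_X_pow', if_neg (by omega)]
  rw [h2, zero_add]
  refine Finset.sum_congr rfl fun k hk => ?_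
  rw [Finset.mem_range] at hk
  have : fG ^ (d + 1) * (PowerSeries.C (PowerSeries.coeff k P) * fs ^ k)
    = PowerSeries.C (PowerSeries.coeff k P * 2 ^ k) * (fG ^ (d + k + 1) * PowerSeries.X ^ k) := by
    rw [map_mul, map_pow]; unfold fs; ring
  rw [this, PowerSeries.coeff_C_mul, PowerSeries.coeff_mul_X_pow', if_pos (by omega),
    fG_pow_coeff, show d + k + (j - k) = j + d by omega]
  ring

lemma f_alg {R : Type*} [CommRing R] (G X p a b : R) (h : G * (1 - X) = 1) :
    ((p * (1 - X) + b * X) ^ 2 + a * (1 - X) ^ 2) * G ^ 2 = (p + b * X * G) ^ 2 + a := by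
  linear_combination (p * (p * (G * (1 - X)) + p + 2 * b * X * G) + a * (G * (1 - X) + 1)) * h

lemma f_main (p : ℂ) (hp : p.re = 1) (a : ℝ) (N : ℕ) :
    ((PowerSeries.C p * (1 - PowerSeries.X) + PowerSeries.C 2 * PowerSeries.X) ^ 2
      + PowerSeries.C ((a:ℂ) ^ 2) * (1 - PowerSeries.X) ^ 2) ^ (N + 1)
      * (fG ^ (2 * N + 1 + 1) * fSub (lP p a N))
      = PowerSeries.C (4 ^ N * N.factorial * (2 / (√π : ℝ)) : ℂ) := by
  have h := congrArg fSub (lP_pow p hp a N)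
  rw [map_mul, map_pow, lQ, map_add, map_pow, map_add, fSub_X, fSub_C, fSub_C, fSub_C] at h
  rw [← h, ← mul_assoc, fs, ← f_alg fG PowerSeries.X (PowerSeries.C p) _ (PowerSeries.C 2) fG_mul,
    mul_pow _ (fG ^ 2), ← pow_mul]
  rfl


/-- Laguerre polynomial `L_j^μ`. -/
noncomputable def lag (μ j : ℕ) (y : ℝ) : ℝ :=
  ∑ k ∈ Finset.range (j + 1), (-1) ^ k * ((j + μ).choose (μ + k)) * y ^ k / k.factorial

lemma I_re (N j : ℕ) (a b : ℝ) :
    ∫ x in Ioi (0:ℝ), Real.exp (-x) * lag (2 * N + 1) j (2 * x) * bF N a x * Real.cos (b * x)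
      = (PowerSeries.coeff j (fG ^ (2 * N + 1 + 1) * fSub (lP (1 + b * Complex.I) a N))).re := by
  set p : ℂ := 1 + b * Complex.I with hp
  have hpr : p.re = 1 := by simp [hp]
  rw [f_coeff]
  have h1 : ∑ k ∈ Finset.range (j + 1), 2 ^ k * ((j + (2 * N + 1)).choose (2 * N + 1 + k) : ℂ)
          * PowerSeries.coeff k (lP p a N)
      = ∫ x in Ioi (0:ℝ), ∑ k ∈ Finset.range (j + 1),
        (2 ^ k * ((j + (2 * N + 1)).choose (2 * N + 1 + k) : ℂ)
          * ((-1) ^ k / (k.factorial : ℂ))) * (lE p k x * (bF N a x : ℂ)) := by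
    rw [integral_finsetSum]
    · refine Finset.sum_congr rfl fun k _ => ?_
      rw [integral_const_mul, lP, PowerSeries.coeff_mk, lM, mul_assoc _ _ (∫ x in Ioi (0:ℝ), _)]
    · intro k _
      exact (lE_bF_integrable p hpr k N a).const_mul _
  have hi : Integrable (fun x : ℝ => ∑ k ∈ Finset.range (j + 1),
        (2 ^ k * ((j + (2 * N + 1)).choose (2 * N + 1 + k) : ℂ)
          * ((-1) ^ k / (k.factorial : ℂ))) * (lE p k x * (bF N a x : ℂ)))
          (volume.restrict (Ioi 0)) :=
    integrable_finsetSum _ fun k _ => (lE_bF_integrable p hpr k N a).const_mul _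
  rw [h1]
  have := integral_re (𝕜 := ℂ) hi
  simp only [RCLike.re_eq_complex_re] at this
  rw [← this]
  refine integral_congr_ae (Eventually.of_forall fun x => ?_)
  simp only [lag]
  rw [Complex.re_sum, Finset.mul_sum, Finset.sum_mul, Finset.sum_mul]
  refine Finset.sum_congr rfl fun k _ => ?_
  have hexp : (Complex.exp (-p * x)).re = Real.exp (-x) * Real.cos (b * x) := by
    rw [Complex.exp_re]
    simp [hp]
  have : (2 ^ k * ((j + (2 * N + 1)).choose (2 * N + 1 + k) : ℂ)
          * ((-1) ^ k / (k.factorial : ℂ))) * (lE p k x * (bF N a x : ℂ))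
      = ((2 ^ k * ((j + (2 * N + 1)).choose (2 * N + 1 + k) : ℝ)
          * ((-1) ^ k / (k.factorial : ℝ)) * x ^ k * bF N a x : ℝ) : ℂ) * Complex.exp (-p * x) := by
    rw [lE]; push_cast; ring
  rw [this, Complex.re_ofReal_mul, hexp, mul_pow]
  ring

lemma I_R {R : Type*} [CommRing R] (p X a A B D b : R) (hA : p ^ 2 + a = A)
    (hB : 2 * p * (b - p) - 2 * a = B) (hD : (b - p) ^ 2 + a = D) :
    (p * (1 - X) + b * X) ^ 2 + a * (1 - X) ^ 2 = A + B * X + D * X ^ 2 := by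
  rw [← hA, ← hB, ← hD]; ring

lemma I_R' (A B D : ℂ) : PowerSeries.C A * (1 - PowerSeries.C B * PowerSeries.X
    + PowerSeries.C D * PowerSeries.X ^ 2) = PowerSeries.C A + PowerSeries.C (-(A * B)) * PowerSeries.X
    + PowerSeries.C (A * D) * PowerSeries.X ^ 2 := by
  simp only [map_neg, map_mul]; ring

lemma I_quad (ϑ φ : ℝ) (hS : 0 < Real.cos ϑ + Real.cos φ) :
    (PowerSeries.C (1 + (Real.sin φ / (Real.cos ϑ + Real.cos φ) : ℝ) * Complex.I)
        * (1 - PowerSeries.X) + PowerSeries.C 2 * PowerSeries.X) ^ 2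
      + PowerSeries.C (((Real.sin ϑ / (Real.cos ϑ + Real.cos φ) : ℝ) : ℂ) ^ 2)
        * (1 - PowerSeries.X) ^ 2
    = PowerSeries.C (2 / ((Real.cos ϑ + Real.cos φ : ℝ) : ℂ) * Complex.exp (φ * Complex.I))
      * geQ (-Real.cos ϑ) (Complex.exp (-(φ * Complex.I))) := by
  have hS' : ((Real.cos ϑ + Real.cos φ : ℝ) : ℂ) ≠ 0 := by exact_mod_cast hS.ne'
  have he : Complex.exp (φ * Complex.I) = Real.cos φ + Real.sin φ * Complex.I := by
    rw [Complex.exp_mul_I]; push_cast; ring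
  have he' : Complex.exp (-(φ * Complex.I)) = Real.cos φ - Real.sin φ * Complex.I := by
    rw [← neg_mul, Complex.exp_mul_I, Complex.cos_neg, Complex.sin_neg]; push_cast; ring
  have h1 : ((Real.sin φ : ℝ) : ℂ) ^ 2 + ((Real.cos φ : ℝ) : ℂ) ^ 2 = 1 := by
    exact_mod_cast Real.sin_sq_add_cos_sq φ
  have h2 : ((Real.sin ϑ : ℝ) : ℂ) ^ 2 + ((Real.cos ϑ : ℝ) : ℂ) ^ 2 = 1 := by
    exact_mod_cast Real.sin_sq_add_cos_sq ϑ
  have hI := Complex.I_sq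
  rw [he, he', geQ]
  push_cast at hS' ⊢
  simp only [Complex.ofReal_cos, Complex.ofReal_sin] at *
  generalize Complex.cos ϑ = c at *
  generalize Complex.sin ϑ = s at *
  generalize Complex.cos φ = d at *
  generalize Complex.sin φ = t at *
  rw [I_R' (2 / (c + d) * (d + t * Complex.I))]
  refine I_R _ _ _ _ _ _ _ ?_ ?_ ?_
  · rw [← map_pow, ← map_add]
    congr 1
    field_simp
    linear_combination h2 - h1 + t ^ 2 * hI
  · rw [← map_sub, ← map_ofNat PowerSeries.C, ← map_mul, ← map_mul, ← map_mul, ← map_sub]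
    congr 1
    field_simp
    linear_combination h1 - h2 - t ^ 2 * hI - 2 * c * (c + d) * (h1 - t ^ 2 * hI)
  · rw [← map_sub, ← map_pow, ← map_add]
    congr 1
    field_simp
    linear_combination h2 - h1 + t ^ 2 * hI - 2 * (c + d) * (d - t * Complex.I) * (h1 - t ^ 2 * hI)

lemma I_series (ϑ φ : ℝ) (hS : 0 < Real.cos ϑ + Real.cos φ) (N : ℕ) :
    PowerSeries.C ((2 / ((Real.cos ϑ + Real.cos φ : ℝ) : ℂ) * Complex.exp (φ * Complex.I)) ^ (N + 1))
      * (fG ^ (2 * N + 1 + 1) * fSub (lP (1 + (Real.sin φ / (Real.cos ϑ + Real.cos φ) : ℝ)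
        * Complex.I) (Real.sin ϑ / (Real.cos ϑ + Real.cos φ)) N))
    = PowerSeries.C (4 ^ N * (2 / (√π : ℝ)) : ℂ)
        * geGen (N + 1) (-Real.cos ϑ) (Complex.exp (-(φ * Complex.I))) := by
  have hre : ∀ b : ℝ, (1 + (b : ℂ) * Complex.I).re = 1 := fun b => by simp
  have h := f_main (1 + (Real.sin φ / (Real.cos ϑ + Real.cos φ) : ℝ)
        * Complex.I) (hre _) (Real.sin ϑ / (Real.cos ϑ + Real.cos φ)) N
  rw [I_quad ϑ φ hS] at h
  have h2 := geGen_pow N (-Real.cos ϑ) (Complex.exp (-(φ * Complex.I)))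
  have hne : geQ (-Real.cos ϑ) (Complex.exp (-(φ * Complex.I))) ≠ 0 := by
    intro h0
    have := geQ_coeff_zero (-Real.cos ϑ) (Complex.exp (-(φ * Complex.I))) 1
    rw [h0] at this
    simp at this
  refine mul_left_cancel₀ (pow_ne_zero (N + 1) hne) ?_
  rw [mul_pow, ← map_pow] at h
  calc _ = _ := by rw [← mul_assoc, mul_comm (geQ _ _ ^ (N + 1)), h]
    _ = PowerSeries.C (4 ^ N * (2 / (√π : ℝ)) : ℂ) * PowerSeries.C (N.factorial : ℂ) := by
      rw [← map_mul]; congr 1; ring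
    _ = _ := by rw [← h2]; ring

lemma I_final (ϑ φ : ℝ) (hS : 0 < Real.cos ϑ + Real.cos φ) (N j : ℕ) :
    ∫ x in Ioi (0:ℝ), Real.exp (-x) * lag (2 * N + 1) j (2 * x)
        * bF N (Real.sin ϑ / (Real.cos ϑ + Real.cos φ)) x
        * Real.cos (Real.sin φ / (Real.cos ϑ + Real.cos φ) * x)
      = 4 ^ N * (2 / √π) * ((Real.cos ϑ + Real.cos φ) / 2) ^ (N + 1) * ((-1) ^ j
        * gegenbauerCt j (N + 1 : ℕ) (Real.cos ϑ)) * Real.cos ((j + N + 1) * φ) := by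
  rw [I_re]
  have h := congrArg (PowerSeries.coeff j) (I_series ϑ φ hS N)
  rw [PowerSeries.coeff_C_mul, PowerSeries.coeff_C_mul, geGen, PowerSeries.coeff_mk, ge_neg] at h
  generalize PowerSeries.coeff j (fG ^ (2 * N + 1 + 1) * _) = z at h ⊢
  set S : ℝ := Real.cos ϑ + Real.cos φ with hSd
  set e : ℂ := Complex.exp (φ * Complex.I) with he
  have hS' : (S : ℂ) ≠ 0 := by exact_mod_cast hS.ne'
  have he0 : e ≠ 0 := Complex.exp_ne_zero _
  have hz : z = ((4 ^ N * (2 / √π) * (S / 2) ^ (N + 1) * ((-1) ^ j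
        * gegenbauerCt j (N + 1 : ℕ) (Real.cos ϑ)) : ℝ) : ℂ)
        * Complex.exp (((-((j + N + 1) * φ) : ℝ) : ℂ) * Complex.I) := by
    have h3 : Complex.exp (((-((j + N + 1) * φ) : ℝ) : ℂ) * Complex.I) = e⁻¹ ^ (N + 1) * e⁻¹ ^ j := by
      rw [he, ← Complex.exp_neg, ← Complex.exp_nat_mul, ← Complex.exp_nat_mul, ← Complex.exp_add]
      congr 1; push_cast; ring
    rw [Complex.exp_neg, ← he] at h
    rw [h3]
    push_cast at h ⊢
    have h4 : (2 / (S:ℂ) * e) ^ (N + 1) * (((S:ℂ) / 2) ^ (N + 1) * e⁻¹ ^ (N + 1)) = 1 := by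
      rw [← mul_pow, ← mul_pow]
      have : 2 / (S:ℂ) * e * ((S:ℂ) / 2 * e⁻¹) = 1 := by field_simp
      rw [this, one_pow]
    refine mul_left_cancel₀ (left_ne_zero_of_mul_eq_one h4) ?_
    rw [h]
    linear_combination (-(4 ^ N * (2 / (√π : ℂ))
      * ((-1) ^ j * (gegenbauerCt j ((N : ℝ) + 1) (Real.cos ϑ) : ℂ) * e⁻¹ ^ j))) * h4
  rw [hz, Complex.re_ofReal_mul, Complex.exp_ofReal_mul_I_re, Real.cos_neg]


/-- Solutions of the second order equation on the half-line. -/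
def uSol (μ : ℕ) (c : ℝ) (f f' : ℝ → ℝ) : Prop :=
  ∀ x > 0, HasDerivAt f (f' x) x ∧ HasDerivAt f' (f x + (c * f x - (μ + 1) * f' x) / x) x

lemma u_deriv {u : ℝ → ℝ} (hu : ContDiffOn ℝ (⊤ : ℕ∞) u (Ioi 0)) :
    ContDiffOn ℝ (⊤ : ℕ∞) (deriv u) (Ioi 0) ∧ ∀ x > 0, HasDerivAt u (deriv u x) x := by
  have h := (contDiffOn_infty_iff_deriv_of_isOpen isOpen_Ioi).1 hu
  refine ⟨h.2, fun x hx => ?_⟩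
  exact (h.1.differentiableAt (isOpen_Ioi.mem_nhds hx)).hasDerivAt

lemma u_besselQ (ν c : ℝ) (f f1 f2 : ℝ → ℝ) (h1 : ∀ x > 0, HasDerivAt f (f1 x) x)
    (h2 : ∀ x > 0, HasDerivAt f1 (f2 x) x) (x : ℝ) (hx : 0 < x) :
    besselQ ν c f x = x * (f1 x + x * f2 x + (c + ν) * f1 x) + c * (x * f1 x + (c + ν) * f x)
      - x ^ 2 * f x := by
  have ha : ∀ y > 0, eulerOp f y = y * f1 y := fun y hy => by
    rw [eulerOp, (h1 y hy).deriv]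
  have hb : HasDerivAt (fun y => eulerOp f y + (c + ν) * f y)
      (1 * f1 x + x * f2 x + (c + ν) * f1 x) x := by
    have : HasDerivAt (fun y => y * f1 y + (c + ν) * f y)
      (1 * f1 x + x * f2 x + (c + ν) * f1 x) x :=
      ((hasDerivAt_id x).mul (h2 x hx)).add ((h1 x hx).const_mul _)
    refine this.congr_of_eventuallyEq ?_
    filter_upwards [isOpen_Ioi.mem_nhds hx] with y hy
    rw [ha y hy]
  rw [besselQ, ha x hx]
  conv_lhs => rw [eulerOp]
  rw [hb.deriv]; ring

lemma u_ode (μ : ℝ) (u u1 u2 u3 u4 : ℝ → ℝ) (h1 : ∀ x > 0, HasDerivAt u (u1 x) x)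
    (h2 : ∀ x > 0, HasDerivAt u1 (u2 x) x) (h3 : ∀ x > 0, HasDerivAt u2 (u3 x) x)
    (h4 : ∀ x > 0, HasDerivAt u3 (u4 x) x) (x : ℝ) (hx : 0 < x) :
    Dop μ (-1) u x = x ^ 2 * (u4 x - 2 * u2 x + u x) + 2 * (μ + 2) * x * (u3 x - u1 x)
      + (μ + 1) * (μ + 2) * (u2 x - u x) := by
  have hg : ∀ y > 0, besselQ (-1) 0 u y = y ^ 2 * (u2 y - u y) := fun y hy => by
    rw [u_besselQ (-1) 0 u u1 u2 h1 h2 y hy]; ring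
  have hg1 : ∀ y > 0, HasDerivAt (besselQ (-1) 0 u)
      (2 * y * (u2 y - u y) + y ^ 2 * (u3 y - u1 y)) y := fun y hy => by
    have : HasDerivAt (fun y => y ^ 2 * (u2 y - u y))
      (2 * y * (u2 y - u y) + y ^ 2 * (u3 y - u1 y)) y := by
      have := (hasDerivAt_pow 2 y).mul ((h3 y hy).sub (h1 y hy))
      exact this.congr_deriv (by simp)
    refine this.congr_of_eventuallyEq ?_
    filter_upwards [isOpen_Ioi.mem_nhds hy] with z hz
    exact hg z hz
  have hg2 : ∀ y > 0, HasDerivAt (fun y => 2 * y * (u2 y - u y) + y ^ 2 * (u3 y - u1 y))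
      (2 * (u2 y - u y) + 2 * y * (u3 y - u1 y) + (2 * y * (u3 y - u1 y) + y ^ 2 * (u4 y - u2 y))) y :=
    fun y hy => by
    have h5 := (((hasDerivAt_id y).const_mul 2).mul ((h3 y hy).sub (h1 y hy))).add
      ((hasDerivAt_pow 2 y).mul ((h4 y hy).sub (h2 y hy)))
    exact h5.congr_deriv (by simp)
  rw [Dop, u_besselQ (-1) μ _ _ _ hg1 hg2 x hx, hg x hx]
  field_simp
  ring

lemma u_split (μ : ℕ) (c lam : ℝ) (hc : c ^ 2 = lam + (μ + 1) ^ 2) (u u1 u2 u3 u4 : ℝ → ℝ)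
    (h1 : ∀ x > 0, HasDerivAt u (u1 x) x)
    (h2 : ∀ x > 0, HasDerivAt u1 (u2 x) x) (h3 : ∀ x > 0, HasDerivAt u2 (u3 x) x)
    (h4 : ∀ x > 0, HasDerivAt u3 (u4 x) x)
    (hu : ∀ x > 0, Dop μ (-1) u x = lam * u x) :
    uSol μ c (fun x => x * u2 x + (μ + 1) * u1 x - x * u x + c * u x)
      (fun x => u2 x + x * u3 x + (μ + 1) * u2 x - (u x + x * u1 x) + c * u1 x) := by
  intro x hx
  constructor
  · have := (((((hasDerivAt_id x).mul (h3 x hx)).add ((h2 x hx).const_mul ((μ:ℝ) + 1))).sub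
      ((hasDerivAt_id x).mul (h1 x hx))).add ((h1 x hx).const_mul c))
    exact this.congr_deriv (by simp)
  · have := (((((h3 x hx).add ((hasDerivAt_id x).mul (h4 x hx))).add
      ((h3 x hx).const_mul ((μ:ℝ) + 1))).sub
      ((h1 x hx).add ((hasDerivAt_id x).mul (h2 x hx)))).add ((h2 x hx).const_mul c))
    refine this.congr_deriv ?_
    have h5 := hu x hx
    rw [u_ode μ u u1 u2 u3 u4 h1 h2 h3 h4 x hx] at h5
    simp only [id]
    field_simp
    linear_combination h5 - u x * hc

lemma u_wr (μ : ℕ) (c : ℝ) (f f' g g' : ℝ → ℝ) (hf : uSol μ c f f') (hg : uSol μ c g g') :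
    ∃ k, ∀ x > 0, x ^ (μ + 1) * (f' x * g x - f x * g' x) = k := by
  have hd : ∀ x ∈ Ioi (0:ℝ), HasDerivAt (fun x => x ^ (μ + 1) * (f' x * g x - f x * g' x)) 0 x := by
    intro x hx
    have hx' : x ≠ 0 := ne_of_gt hx
    have := (hasDerivAt_pow (μ + 1) x).mul
      (((hf x hx).2.mul (hg x hx).1).sub ((hf x hx).1.mul (hg x hx).2))
    refine this.congr_deriv ?_
    simp only [Pi.mul_apply, Pi.sub_apply]
    push_cast
    simp only [pow_succ]
    field_simp
    ring
  obtain ⟨k, hk⟩ := isOpen_Ioi.exists_is_const_of_deriv_eq_zero isPreconnected_Ioi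
    (fun x hx => (hd x hx).differentiableAt.differentiableWithinAt) (fun x hx => (hd x hx).deriv)
  exact ⟨k, fun x hx => hk x hx⟩

lemma u_quot (μ : ℕ) (c : ℝ) (f f' g g' : ℝ → ℝ) (hf : uSol μ c f f') (hg : uSol μ c g g')
    (k : ℝ) (hk : ∀ x > 0, x ^ (μ + 1) * (f' x * g x - f x * g' x) = k) (x : ℝ) (hx : 0 < x)
    (h0 : g x ≠ 0) : HasDerivAt (fun x => f x / g x) (k / (x ^ (μ + 1) * g x ^ 2)) x := by
  refine ((hf x hx).1.div (hg x hx).1 h0).congr_deriv ?_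
  rw [← hk x hx]
  field_simp

/-- uniqueness backwards. -/
lemma u_unique (μ : ℕ) (c : ℝ) (f f' : ℝ → ℝ) (hf : uSol μ c f f') (X : ℝ)
    (h0 : f X = 0) (h0' : f' X = 0) (x : ℝ) (hx : 0 < x) (hxX : x ≤ X) : f x = 0 := by
  set K : ℝ := 2 + |c| / x + 2 * (μ + 1) / x with hK
  have hd : ∀ y > 0, HasDerivAt (fun y => (f y ^ 2 + f' y ^ 2) * Real.exp (K * y))
      ((2 * f y * f' y + 2 * f' y * (f y + (c * f y - (μ + 1) * f' y) / y)
        + K * (f y ^ 2 + f' y ^ 2)) * Real.exp (K * y)) y := by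
    intro y hy
    have := (((hf y hy).1.pow 2).add ((hf y hy).2.pow 2)).mul
      ((((hasDerivAt_id y).const_mul K)).exp)
    refine this.congr_deriv ?_
    simp
    ring
  have hm : MonotoneOn (fun y => (f y ^ 2 + f' y ^ 2) * Real.exp (K * y)) (Icc x X) := by
    refine monotoneOn_of_deriv_nonneg (convex_Icc _ _)
      (fun y hy => (hd y (hx.trans_le hy.1)).continuousAt.continuousWithinAt)
      (fun y hy => ?_) (fun y hy => ?_)
    · rw [interior_Icc] at hy
      exact (hd y (hx.trans hy.1)).differentiableAt.differentiableWithinAt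
    · rw [interior_Icc] at hy
      have hy0 := hx.trans hy.1
      rw [(hd y hy0).deriv]
      refine mul_nonneg ?_ (Real.exp_pos _).le
      have e1 : c / y ≤ |c| / x ∧ -(|c| / x) ≤ c / y := by
        have : |c / y| ≤ |c| / x := by
          rw [abs_div, abs_of_pos hy0]
          gcongr
          exact hy.1.le
        exact ⟨(abs_le.1 this).2, (abs_le.1 this).1⟩
      have e2 : (μ + 1 : ℝ) / y ≤ (μ + 1) / x := by gcongr; exact hy.1.le
      have e3 : (0:ℝ) ≤ (μ + 1) / y := by positivity
      have e4 : 2 * f y * f' y + 2 * f' y * (f y + (c * f y - (μ + 1) * f' y) / y)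
        + K * (f y ^ 2 + f' y ^ 2) = 4 * (f y * f' y) + 2 * (c / y) * (f y * f' y)
          - 2 * ((μ + 1) / y) * f' y ^ 2
          + (2 + |c| / x + 2 * ((μ + 1) / x)) * (f y ^ 2 + f' y ^ 2) := by
        rw [hK]; field_simp; ring
      rw [e4]
      generalize c / y = C at *
      generalize |c| / x = D at *
      generalize (μ + 1 : ℝ) / y = M at *
      generalize (μ + 1 : ℝ) / x = M' at *
      nlinarith [sq_nonneg (f y + f' y), sq_nonneg (f y - f' y), sq_nonneg (f y), sq_nonneg (f' y),
        mul_nonneg (sub_nonneg.2 e1.1) (sq_nonneg (f y - f' y)),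
        mul_nonneg (sub_nonneg.2 e1.2) (sq_nonneg (f y + f' y)),
        mul_nonneg (sub_nonneg.2 e2) (sq_nonneg (f' y)), mul_nonneg (e3.trans e2) (sq_nonneg (f y))]
  have := hm (left_mem_Icc.2 hxX) (right_mem_Icc.2 hxX) hxX
  simp only [h0, h0'] at this
  have h2 := Real.exp_pos (K * x)
  have h3 : f x ^ 2 + f' x ^ 2 ≤ 0 := by
    by_contra h
    push Not at h
    have := mul_pos h h2
    linarith
  nlinarith [sq_nonneg (f x), sq_nonneg (f' x)]


/-- Laguerre coefficients. -/
noncomputable def lagC (μ j k : ℕ) : ℝ := (-1) ^ k * ((j + μ).choose (μ + k)) / k.factorial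

/-- Laguerre polynomial as a polynomial. -/
noncomputable def lagP (μ j : ℕ) : Polynomial ℝ :=
  ∑ k ∈ Finset.range (j + 1), Polynomial.C (lagC μ j k) * Polynomial.X ^ k

lemma lagP_coeff (μ j k : ℕ) : (lagP μ j).coeff k = lagC μ j k := by
  rw [lagP, Polynomial.finsetSum_coeff]
  simp only [Polynomial.coeff_C_mul_X_pow]
  rw [Finset.sum_ite_eq]
  split_ifs with h
  · rfl
  · rw [Finset.mem_range, not_lt] at h
    rw [lagC, Nat.choose_eq_zero_of_lt (by omega)]; simp

lemma lagP_eval (μ j : ℕ) (y : ℝ) : (lagP μ j).eval y = lag μ j y := by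
  rw [lagP, lag, Polynomial.eval_finsetSum]
  refine Finset.sum_congr rfl fun k _ => ?_
  simp [lagC]; ring

lemma lagC_rec (μ j k : ℕ) :
    ((k : ℝ) + 1) * (k + μ + 1) * lagC μ j (k + 1) = (k - j) * lagC μ j k := by
  have h := Nat.choose_succ_right_eq (j + μ) (μ + k)
  have h' : ((j + μ).choose (μ + k + 1) : ℝ) * (μ + k + 1) = (j + μ).choose (μ + k) * ((j : ℝ) - k) := by
    rcases le_or_gt k j with hk | hk
    · have e : j + μ - (μ + k) = j - k := by omega
      rw [e] at h
      have := congrArg (Nat.cast : ℕ → ℝ) h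
      push_cast [Nat.cast_sub hk] at this
      exact this
    · rw [Nat.choose_eq_zero_of_lt (by omega), Nat.choose_eq_zero_of_lt (by omega)]; simp
  rw [lagC, lagC, Nat.factorial_succ, ← add_assoc, pow_succ]
  push_cast
  have hk : (k.factorial : ℝ) ≠ 0 := by positivity
  have hk1 : (k : ℝ) + 1 ≠ 0 := by positivity
  field_simp
  linear_combination -h'

lemma lagP_ode (μ j : ℕ) (y : ℝ) :
    y * (lagP μ j).derivative.derivative.eval y + ((μ : ℝ) + 1 - y) * (lagP μ j).derivative.eval y
      + j * (lagP μ j).eval y = 0 := by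
  have h : Polynomial.X * (lagP μ j).derivative.derivative
      + Polynomial.C ((μ : ℝ) + 1) * (lagP μ j).derivative
      - Polynomial.X * (lagP μ j).derivative + Polynomial.C (j : ℝ) * lagP μ j = 0 := by
    ext k
    have hr := lagC_rec μ j k
    cases k with
    | zero =>
      simp [Polynomial.coeff_derivative, lagP_coeff] at hr ⊢
      linear_combination hr
    | succ k =>
      simp only [Polynomial.coeff_add, Polynomial.coeff_sub, Polynomial.coeff_C_mul,
        Polynomial.coeff_derivative, lagP_coeff, Polynomial.coeff_X_mul, Polynomial.coeff_zero] at hr ⊢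
      push_cast at hr ⊢
      linear_combination hr
  have := congrArg (Polynomial.eval y) h
  simp at this
  linear_combination this

/-- decaying solution. -/
noncomputable def uL (μ j : ℕ) (x : ℝ) : ℝ := Real.exp (-x) * (lagP μ j).eval (2 * x)
/-- its derivative. -/
noncomputable def uL' (μ j : ℕ) (x : ℝ) : ℝ :=
  Real.exp (-x) * (2 * (lagP μ j).derivative.eval (2 * x) - (lagP μ j).eval (2 * x))
/-- growing solution. -/
noncomputable def uM (μ j : ℕ) (x : ℝ) : ℝ := Real.exp x * (lagP μ j).eval (-2 * x)
/-- its derivative. -/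
noncomputable def uM' (μ j : ℕ) (x : ℝ) : ℝ :=
  Real.exp x * ((lagP μ j).eval (-2 * x) - 2 * (lagP μ j).derivative.eval (-2 * x))

lemma poly_comp (P : Polynomial ℝ) (a x : ℝ) :
    HasDerivAt (fun x => P.eval (a * x)) (a * P.derivative.eval (a * x)) x := by
  have h1 : HasDerivAt (fun x => a * x) a x := by
    simpa using (hasDerivAt_id x).const_mul a
  have := (P.hasDerivAt (a * x)).comp x h1
  exact this.congr_deriv (by ring)

lemma uL_sol (μ j : ℕ) : uSol μ (-(2 * j + μ + 1)) (uL μ j) (uL' μ j) := by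
  intro x hx
  have he : HasDerivAt (fun x : ℝ => Real.exp (-x)) (-Real.exp (-x)) x := by
    simpa using (hasDerivAt_neg x).exp
  constructor
  · refine (he.mul (poly_comp (lagP μ j) 2 x)).congr_deriv ?_
    rw [uL']; ring
  · refine (he.mul (((poly_comp (lagP μ j).derivative 2 x).const_mul 2).sub
      (poly_comp (lagP μ j) 2 x))).congr_deriv ?_
    have h := lagP_ode μ j (2 * x)
    simp only [uL, uL', Pi.sub_apply]
    generalize (lagP μ j).derivative.derivative.eval (2 * x) = a at *
    generalize (lagP μ j).derivative.eval (2 * x) = b at *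
    generalize (lagP μ j).eval (2 * x) = d at *
    field_simp
    linear_combination 2 * h

lemma uM_sol (μ j : ℕ) : uSol μ (2 * j + μ + 1) (uM μ j) (uM' μ j) := by
  intro x hx
  have he : HasDerivAt (fun x : ℝ => Real.exp x) (Real.exp x) x := Real.hasDerivAt_exp x
  constructor
  · refine (he.mul (poly_comp (lagP μ j) (-2) x)).congr_deriv ?_
    rw [uM']; ring
  · refine (he.mul ((poly_comp (lagP μ j) (-2) x).sub
      ((poly_comp (lagP μ j).derivative (-2) x).const_mul 2))).congr_deriv ?_
    have h := lagP_ode μ j (-2 * x)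
    simp only [uM, uM', Pi.sub_apply]
    generalize (lagP μ j).derivative.derivative.eval (-2 * x) = a at *
    generalize (lagP μ j).derivative.eval (-2 * x) = b at *
    generalize (lagP μ j).eval (-2 * x) = d at *
    field_simp
    linear_combination (-2) * h

lemma lag_neg_ge (μ j : ℕ) (x : ℝ) (hx : 0 ≤ x) : 1 ≤ (lagP μ j).eval (-2 * x) := by
  rw [lagP_eval, lag, Finset.sum_range_succ']
  have h1 : (1 : ℝ) ≤ ((j + μ).choose (μ + 0) : ℝ) := by
    have : 0 < (j + μ).choose (μ + 0) := Nat.choose_pos (by omega)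
    exact_mod_cast this
  have h2 : 0 ≤ ∑ k ∈ Finset.range j, (-1 : ℝ) ^ (k + 1) * ((j + μ).choose (μ + (k + 1)))
      * (-2 * x) ^ (k + 1) / (k + 1).factorial := by
    refine Finset.sum_nonneg fun k _ => ?_
    have : (-1 : ℝ) ^ (k + 1) * ((j + μ).choose (μ + (k + 1))) * (-2 * x) ^ (k + 1)
      = ((j + μ).choose (μ + (k + 1))) * (2 * x) ^ (k + 1) := by
      rw [show -2 * x = (-1) * (2 * x) by ring, mul_pow (-1 : ℝ)]
      have : (-1 : ℝ) ^ (k + 1) * (-1 : ℝ) ^ (k + 1) = 1 := by rw [← mul_pow]; norm_num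
      linear_combination (((j + μ).choose (μ + (k + 1))) * (2 * x) ^ (k + 1)) * this
    rw [this]; positivity
  have h3 : (-1 : ℝ) ^ 0 * ((j + μ).choose (μ + 0)) * (-2 * x) ^ 0 / (Nat.factorial 0)
      = ((j + μ).choose (μ + 0) : ℝ) := by simp
  rw [h3]
  linarith [h2]

lemma lag_abs_le (μ j : ℕ) (x : ℝ) (hx : 0 ≤ x) :
    |(lagP μ j).eval (2 * x)| ≤ (lagP μ j).eval (-2 * x) := by
  rw [lagP_eval, lagP_eval, lag, lag]
  refine (Finset.abs_sum_le_sum_abs _ _).trans (Finset.sum_le_sum fun k _ => ?_)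
  have : (-1 : ℝ) ^ k * ((j + μ).choose (μ + k)) * (-2 * x) ^ k
      = ((j + μ).choose (μ + k)) * (2 * x) ^ k := by
    rw [show -2 * x = (-1) * (2 * x) by ring, mul_pow (-1 : ℝ)]
    have : (-1 : ℝ) ^ k * (-1 : ℝ) ^ k = 1 := by rw [← mul_pow]; norm_num
    linear_combination (((j + μ).choose (μ + k)) * (2 * x) ^ k) * this
  rw [this, abs_div, abs_mul, abs_mul, abs_pow, abs_neg, abs_one, one_pow, one_mul,
    abs_of_nonneg (by positivity : (0:ℝ) ≤ (j + μ).choose (μ + k)),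
    abs_of_nonneg (by positivity : (0:ℝ) ≤ (2 * x) ^ k),
    abs_of_nonneg (by positivity : (0:ℝ) ≤ k.factorial)]

lemma lag_lower (μ j : ℕ) : ∃ C > 0, ∃ X : ℝ, ∀ x ≥ X, C ≤ |(lagP μ j).eval (2 * x)| := by
  set P : Polynomial ℝ := (lagP μ j).comp (Polynomial.C 2 * Polynomial.X) with hP
  have hPe : ∀ x, P.eval x = (lagP μ j).eval (2 * x) := fun x => by simp [hP]
  have h0 : P.eval 0 ≠ 0 := by
    have := lag_neg_ge μ j 0 le_rfl
    rw [hPe]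
    simp at this ⊢
    intro h; rw [h] at this; norm_num at this
  rcases le_or_gt P.degree 0 with hd | hd
  · rw [Polynomial.eq_C_of_degree_le_zero hd] at hPe h0
    simp only [Polynomial.eval_C] at hPe h0
    exact ⟨|P.coeff 0|, abs_pos.2 h0, 0, fun x _ => by rw [← hPe]⟩
  · have := P.abs_tendsto_atTop hd
    obtain ⟨X, hX⟩ := (this.eventually_ge_atTop 1).exists_forall_of_atTop
    exact ⟨1, one_pos, X, fun x hx => by rw [← hPe]; exact hX x hx⟩

lemma u_L2 (μ : ℕ) (u : ℝ → ℝ) (hu_L2 : IntegrableOn (fun x => u x ^ 2 * x ^ (μ : ℝ)) (Ioi 0))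
    (ε X : ℝ) (hε : 0 < ε) (h : ∀ x ≥ X, ε ≤ |u x|) : False := by
  set Y := max X 1
  have h1 : IntegrableOn (fun x => u x ^ 2 * x ^ (μ : ℝ)) (Ioi Y) :=
    hu_L2.mono_set (Ioi_subset_Ioi (zero_le_one.trans (le_max_right _ _)))
  have h2 : IntegrableOn (fun _ : ℝ => ε ^ 2) (Ioi Y) := by
    refine Integrable.mono' h1 aestronglyMeasurable_const ?_
    filter_upwards [ae_restrict_mem measurableSet_Ioi] with x hx
    have hx1 : 1 ≤ x := (le_max_right X 1).trans (le_of_lt hx)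
    have hx2 : X ≤ x := (le_max_left X 1).trans (le_of_lt hx)
    have h3 := h x hx2
    have h4 : ε ^ 2 ≤ u x ^ 2 := by
      rw [← sq_abs (u x)]; gcongr
    rw [Real.norm_of_nonneg (by positivity), Real.rpow_natCast]
    have h5 : 1 ≤ x ^ μ := one_le_pow₀ hx1
    nlinarith [sq_nonneg (u x)]
  rw [integrableOn_const_iff (by finiteness)] at h2
  simp at h2
  exact hε.ne' h2


lemma uM_ge (μ j : ℕ) (x : ℝ) (hx : 0 ≤ x) : Real.exp x ≤ uM μ j x := by
  have := lag_neg_ge μ j x hx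
  have h2 := Real.exp_pos x
  rw [uM]; nlinarith

lemma uM_cont (μ j : ℕ) : Continuous (uM μ j) := by
  unfold uM; fun_prop

lemma uL_cont (μ j : ℕ) : Continuous (uL μ j) := by
  unfold uL; fun_prop

lemma uL_le (μ j : ℕ) (x : ℝ) (hx : 0 ≤ x) : |uL μ j x| ≤ Real.exp (-2 * x) * uM μ j x := by
  rw [uL, uM, abs_mul, abs_of_pos (Real.exp_pos _), ← mul_assoc, ← Real.exp_add,
    show -2 * x + x = -x by ring]
  exact mul_le_mul_of_nonneg_left (lag_abs_le μ j x hx) (Real.exp_pos _).le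

lemma a_w (μ j : ℕ) (p p' : ℝ → ℝ) (hp : uSol μ (2 * j + μ + 1) p p') :
    ∃ k γ : ℝ, (∀ x > 0, HasDerivAt (fun x => p x / uM μ j x) (k / (x ^ (μ + 1) * uM μ j x ^ 2)) x)
      ∧ ∀ x ≥ 1, |p x / uM μ j x - γ| ≤ |k| * Real.exp (-2 * x) := by
  obtain ⟨k, hk⟩ := u_wr μ _ p p' _ _ hp (uM_sol μ j)
  have hm : ∀ x ≥ 0, 0 < uM μ j x := fun x hx => (Real.exp_pos x).trans_le (uM_ge μ j x hx)
  have hd : ∀ x > 0, HasDerivAt (fun x => p x / uM μ j x)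
      (k / (x ^ (μ + 1) * uM μ j x ^ 2)) x := fun x hx =>
    u_quot μ _ p p' _ _ hp (uM_sol μ j) k hk x hx (hm x hx.le).ne'
  have hb : ∀ x ≥ 1, ‖k / (x ^ (μ + 1) * uM μ j x ^ 2)‖ ≤ |k| * Real.exp (-2 * x) := by
    intro x hx
    have h1 : (1 : ℝ) ≤ x ^ (μ + 1) := one_le_pow₀ hx
    have h2 := uM_ge μ j x (by linarith)
    have h3 := Real.exp_pos x
    rw [norm_div, Real.norm_eq_abs, div_eq_mul_inv]
    gcongr
    rw [Real.norm_of_nonneg (by positivity), show -2 * x = -(x + x) by ring, Real.exp_neg,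
      Real.exp_add]
    have h4 : Real.exp x * Real.exp x ≤ uM μ j x ^ 2 := by nlinarith
    have h5 : Real.exp x * Real.exp x ≤ x ^ (μ + 1) * uM μ j x ^ 2 := by
      nlinarith [sq_nonneg (uM μ j x)]
    exact inv_anti₀ (mul_pos h3 h3) h5
  have hei : ∀ a : ℝ, IntegrableOn (fun x => |k| * Real.exp (-2 * x)) (Ioi a) := fun a =>
    (exp_neg_integrableOn_Ioi a two_pos).const_mul _
  have hintg : ∀ a ≥ 1, IntegrableOn (fun x => k / (x ^ (μ + 1) * uM μ j x ^ 2)) (Ioi a) := by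
    intro a ha
    refine Integrable.mono' (hei a) ?_ ?_
    · refine ContinuousOn.aestronglyMeasurable ?_ measurableSet_Ioi
      have := uM_cont μ j
      refine ContinuousOn.div continuousOn_const (by fun_prop) ?_
      intro x hx
      have hx0 : 0 < x := lt_of_lt_of_le one_pos (ha.trans (le_of_lt hx))
      have := hm x hx0.le
      positivity
    · filter_upwards [ae_restrict_mem measurableSet_Ioi] with x hx
      exact hb x (ha.trans (le_of_lt hx))
  obtain ⟨γ, ht⟩ : ∃ γ, Tendsto (fun x => p x / uM μ j x) atTop (nhds γ) :=
    ⟨_, tendsto_limUnder_of_hasDerivAt_of_integrableOn_Ioi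
      (fun x hx => hd x (one_pos.trans hx)) (hintg 1 le_rfl)⟩
  refine ⟨k, γ, hd, fun x hx => ?_⟩
  have h1 := integral_Ioi_of_hasDerivAt_of_tendsto' (a := x) (f := fun x => p x / uM μ j x)
    (f' := fun x => k / (x ^ (μ + 1) * uM μ j x ^ 2))
    (fun y hy => hd y (one_pos.trans_le (hx.trans hy))) (hintg x hx) ht
  rw [abs_sub_comm, ← h1, ← Real.norm_eq_abs]
  refine (norm_integral_le_of_norm_le (hei x) ?_).trans ?_
  · filter_upwards [ae_restrict_mem measurableSet_Ioi] with y hy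
    exact hb y (hx.trans (le_of_lt hy))
  · rw [integral_const_mul, integral_exp_mul_Ioi (by norm_num)]
    have := Real.exp_pos (-2 * x)
    refine mul_le_mul_of_nonneg_left ?_ (abs_nonneg k)
    linarith

lemma u_cmp (X : ℝ) (f f' g g' : ℝ → ℝ) (hf : ∀ x ≥ X, HasDerivAt f (f' x) x)
    (hg : ∀ x ≥ X, HasDerivAt g (g' x) x) (h : ∀ x ≥ X, f' x ≤ g' x) (x : ℝ) (hx : X ≤ x) :
    f x - f X ≤ g x - g X := by
  have hm : MonotoneOn (fun x => g x - f x) (Ici X) := by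
    refine monotoneOn_of_deriv_nonneg (convex_Ici X)
      (fun y hy => ((hg y hy).sub (hf y hy)).continuousAt.continuousWithinAt)
      (fun y hy => ?_) (fun y hy => ?_)
    · rw [interior_Ici] at hy
      exact ((hg y (le_of_lt hy)).sub (hf y (le_of_lt hy))).differentiableAt.differentiableWithinAt
    · rw [interior_Ici] at hy
      have := ((hg y (le_of_lt hy)).sub (hf y (le_of_lt hy))).deriv
      have e : deriv (fun x => g x - f x) y = g' y - f' y := this
      rw [e]
      linarith [h y (le_of_lt hy)]
  have := hm (mem_Ici.2 le_rfl) (mem_Ici.2 hx) hx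
  simp only at this
  linarith

lemma u_cmp_abs (X : ℝ) (f f' g g' : ℝ → ℝ) (hf : ∀ x ≥ X, HasDerivAt f (f' x) x)
    (hg : ∀ x ≥ X, HasDerivAt g (g' x) x) (h : ∀ x ≥ X, |f' x| ≤ g' x) (x : ℝ) (hx : X ≤ x) :
    |f x - f X| ≤ g x - g X := by
  rw [abs_le]
  constructor
  · have := u_cmp X (fun x => - f x) (fun x => - f' x) g g' (fun x hx => (hf x hx).neg) hg
      (fun x hx => (neg_le_abs _).trans (h x hx)) x hx
    linarith
  · exact u_cmp X f f' g g' hf hg (fun x hx => (le_abs_self _).trans (h x hx)) x hx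

lemma a_z (μ j : ℕ) (q q' : ℝ → ℝ) (hq : uSol μ (-(2 * j + μ + 1)) q q') :
    ∃ k X C : ℝ, 1 ≤ X ∧ 0 < C ∧ (∀ x ≥ X, C * Real.exp (-x) ≤ |uL μ j x|) ∧
      (∀ x > 0, x ^ (μ + 1) * (q' x * uL μ j x - q x * uL' μ j x) = k) ∧
      (∀ x ≥ X, HasDerivAt (fun x => q x / uL μ j x) (k / (x ^ (μ + 1) * uL μ j x ^ 2)) x) := by
  obtain ⟨k, hk⟩ := u_wr μ _ q q' _ _ hq (uL_sol μ j)
  obtain ⟨C, hC, X, hX⟩ := lag_lower μ j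
  have h1 : ∀ x ≥ max X 1, C * Real.exp (-x) ≤ |uL μ j x| := by
    intro x hx
    rw [uL, abs_mul, abs_of_pos (Real.exp_pos _), mul_comm]
    exact mul_le_mul_of_nonneg_left (hX x ((le_max_left _ _).trans hx)) (Real.exp_pos _).le
  refine ⟨k, max X 1, C, le_max_right _ _, hC, h1, hk, fun x hx => ?_⟩
  refine u_quot μ _ q q' _ _ hq (uL_sol μ j) k hk x
    (one_pos.trans_le ((le_max_right _ _).trans hx)) ?_
  have : 0 < |uL μ j x| := (mul_pos hC (Real.exp_pos _)).trans_le (h1 x hx)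
  exact abs_pos.1 this

lemma a_qm (μ j : ℕ) (q q' : ℝ → ℝ) (hq : uSol μ (-(2 * j + μ + 1)) q q') :
    Tendsto (fun x => q x / uM μ j x) atTop (nhds 0) := by
  obtain ⟨k, X, C, hX1, hC, hL, -, hz⟩ := a_z μ j q q' hq
  set K := |k| / C ^ 2 with hK
  have hg : ∀ x ≥ X, HasDerivAt (fun x => K * (Real.exp (2 * x) / x))
      (K * ((2 * Real.exp (2 * x) * x - Real.exp (2 * x)) / x ^ 2)) x := by
    intro x hx
    have hx0 : x ≠ 0 := (one_pos.trans_le (hX1.trans hx)).ne'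
    have h1 : HasDerivAt (fun x : ℝ => Real.exp (2 * x)) (2 * Real.exp (2 * x)) x := by
      have := ((hasDerivAt_id x).const_mul 2).exp
      refine this.congr_deriv ?_
      simp; ring
    refine ((h1.div (hasDerivAt_id x) hx0).const_mul K).congr_deriv ?_
    simp
  have hb : ∀ x ≥ X, |k / (x ^ (μ + 1) * uL μ j x ^ 2)|
      ≤ K * ((2 * Real.exp (2 * x) * x - Real.exp (2 * x)) / x ^ 2) := by
    intro x hx
    have hx1 : 1 ≤ x := hX1.trans hx
    have hx0 : 0 < x := one_pos.trans_le hx1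
    have h1 : x ≤ x ^ (μ + 1) := le_self_pow₀ hx1 (by omega)
    have h2 : C ^ 2 * (Real.exp (2 * x))⁻¹ ≤ uL μ j x ^ 2 := by
      have h3 := hL x hx
      have h4 : 0 < C * Real.exp (-x) := by positivity
      have e : C ^ 2 * (Real.exp (2 * x))⁻¹ = (C * Real.exp (-x)) ^ 2 := by
        rw [← Real.exp_neg, mul_pow, ← Real.exp_nat_mul]; congr 2; push_cast; ring
      rw [e, ← sq_abs (uL μ j x)]
      gcongr
    have h5 := Real.exp_pos (2 * x)
    calc |k / (x ^ (μ + 1) * uL μ j x ^ 2)| ≤ |k| / (x * (C ^ 2 * (Real.exp (2 * x))⁻¹)) := by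
          have : 0 < C ^ 2 * (Real.exp (2 * x))⁻¹ := by positivity
          rw [abs_div, abs_of_nonneg (by positivity : 0 ≤ x ^ (μ + 1) * uL μ j x ^ 2)]
          gcongr
      _ = K * (Real.exp (2 * x) / x) := by rw [hK]; field_simp
      _ ≤ _ := by
          have : 0 ≤ K := by positivity
          refine mul_le_mul_of_nonneg_left ?_ this
          rw [div_le_div_iff₀ hx0 (by positivity)]
          have : 0 ≤ Real.exp (2 * x) * x * (x - 1) :=
            mul_nonneg (by positivity) (by linarith)
          nlinarith
  have hzb := u_cmp_abs X _ _ _ _ hz hg hb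
  set Z := |q X / uL μ j X| + |K * (Real.exp (2 * X) / X)| with hZ
  have hfin : ∀ x ≥ X, |q x / uM μ j x| ≤ Z * Real.exp (-2 * x) + K * x⁻¹ := by
    intro x hx
    have hx0 : 0 < x := one_pos.trans_le (hX1.trans hx)
    have hm := (Real.exp_pos x).trans_le (uM_ge μ j x hx0.le)
    have hl : 0 < |uL μ j x| := (mul_pos hC (Real.exp_pos _)).trans_le (hL x hx)
    have hl' := abs_pos.1 hl
    have h1 : |q x / uL μ j x| ≤ Z + K * (Real.exp (2 * x) / x) := by
      have h2 := hzb x hx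
      have h3 := abs_sub_abs_le_abs_sub (q x / uL μ j x) (q X / uL μ j X)
      have h4 := neg_abs_le (K * (Real.exp (2 * X) / X))
      rw [hZ]; linarith
    have h0 : 0 ≤ Z + K * (Real.exp (2 * x) / x) := (abs_nonneg _).trans h1
    have e : q x / uM μ j x = q x / uL μ j x * (uL μ j x / uM μ j x) := by field_simp
    rw [e, abs_mul, abs_div (uL μ j x), abs_of_pos hm]
    have h5 : |uL μ j x| / uM μ j x ≤ Real.exp (-2 * x) := by
      rw [div_le_iff₀ hm]; exact uL_le μ j x hx0.le
    calc _ ≤ (Z + K * (Real.exp (2 * x) / x)) * Real.exp (-2 * x) := by gcongr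
      _ = _ := by
        have : Real.exp (2 * x) * Real.exp (-2 * x) = 1 := by
          rw [← Real.exp_add]; simp
        rw [add_mul]; congr 1
        rw [div_eq_mul_inv]
        linear_combination K * x⁻¹ * this
  refine squeeze_zero_norm' (a := fun x => Z * Real.exp (-2 * x) + K * x⁻¹) ?_ ?_
  · filter_upwards [eventually_ge_atTop X] with x hx
    exact hfin x hx
  · have h1 : Tendsto (fun x : ℝ => Real.exp (-2 * x)) atTop (nhds 0) :=
      Real.tendsto_exp_atBot.comp (tendsto_id.const_mul_atTop_of_neg (by norm_num))
    simpa using (h1.const_mul Z).add (tendsto_inv_atTop_zero.const_mul K)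


lemma uSol_lin (μ : ℕ) (c a : ℝ) (f f' g g' : ℝ → ℝ) (hf : uSol μ c f f') (hg : uSol μ c g g') :
    uSol μ c (fun x => f x - a * g x) (fun x => f' x - a * g' x) := by
  intro x hx
  refine ⟨((hf x hx).1.sub ((hg x hx).1.const_mul a)),
    ((hf x hx).2.sub ((hg x hx).2.const_mul a)).congr_deriv ?_⟩
  field_simp
  ring

lemma b_decay (μ j : ℕ) (a : ℝ) (ha : 0 < a) : ∀ᶠ x in atTop,
    x ^ (μ + 1) * uL μ j x ^ 2 * (3 / 2 * Real.exp (3 / 2 * x)) ≤ a := by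
  set R : Polynomial ℝ := Polynomial.C (3 / 2) * (Polynomial.C 2 * Polynomial.X) ^ (μ + 1)
    * (lagP μ j).comp (Polynomial.C 4 * Polynomial.X) ^ 2 with hR
  have h1 := R.tendsto_div_exp_atTop.comp
    (tendsto_id.const_mul_atTop (by norm_num : (0:ℝ) < 1 / 2))
  filter_upwards [h1.eventually_le_const ha] with x hx
  refine le_trans (le_of_eq ?_) hx
  simp only [hR, Function.comp, id, uL]
  simp only [Polynomial.eval_mul, Polynomial.eval_pow, Polynomial.eval_C, Polynomial.eval_X,
    Polynomial.eval_comp]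
  rw [show (2:ℝ) * (1 / 2 * x) = x by ring, show (4:ℝ) * (1 / 2 * x) = 2 * x by ring,
    div_eq_mul_inv _ (Real.exp _), ← Real.exp_neg]
  have : Real.exp (-(1 / 2 * x)) = Real.exp (-x) ^ 2 * Real.exp (3 / 2 * x) := by
    rw [← Real.exp_nat_mul, ← Real.exp_add]; congr 1; push_cast; ring
  rw [this]; ring

lemma b_pdecay (μ j : ℕ) (k : ℝ) : ∀ᶠ x in atTop,
    |k| * Real.exp (-2 * x) * uM μ j x ≤ 1 := by
  set R : Polynomial ℝ := Polynomial.C |k| * (lagP μ j).comp (Polynomial.C (-2) * Polynomial.X) with hR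
  filter_upwards [R.tendsto_div_exp_atTop.eventually_le_const one_pos] with x hx
  refine le_trans (le_of_eq ?_) hx
  simp only [hR, uM]
  simp only [Polynomial.eval_mul, Polynomial.eval_C, Polynomial.eval_X, Polynomial.eval_comp]
  have : Real.exp (-x) = Real.exp (-2 * x) * Real.exp x := by
    rw [← Real.exp_add]; congr 1; ring
  rw [div_eq_mul_inv, ← Real.exp_neg, this]; ring

lemma b_main (μ j : ℕ) (hμ : 1 ≤ μ) (u p p' q q' : ℝ → ℝ)
    (hp : uSol μ (2 * j + μ + 1) p p') (hq : uSol μ (-(2 * j + μ + 1)) q q')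
    (hu : ∀ x > 0, 2 * (2 * j + μ + 1) * u x = p x - q x)
    (hu_L2 : IntegrableOn (fun x => u x ^ 2 * x ^ (μ : ℝ)) (Ioi 0))
    (B : ℝ) (hB : Tendsto u (nhdsWithin 0 (Ioi 0)) (nhds B)) :
    ∃ α : ℝ, ∀ x > 0, u x = α * uL μ j x := by
  set c : ℝ := 2 * j + μ + 1 with hc
  have hc0 : 0 < c := by positivity
  obtain ⟨k1, γ, hw, hwγ⟩ := a_w μ j p p' hp
  have hmp : ∀ x ≥ 0, 0 < uM μ j x := fun x hx => (Real.exp_pos x).trans_le (uM_ge μ j x hx)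
  have hexp : Tendsto (fun x : ℝ => Real.exp (-2 * x)) atTop (nhds 0) :=
      Real.tendsto_exp_atBot.comp (tendsto_id.const_mul_atTop_of_neg (by norm_num))
  -- γ = 0
  have hγ : γ = 0 := by
    by_contra hγ
    have h1 : Tendsto (fun x => p x / uM μ j x) atTop (nhds γ) := by
      rw [tendsto_iff_norm_sub_tendsto_zero]
      refine squeeze_zero' (Eventually.of_forall fun _ => norm_nonneg _) ?_
        (by rw [← mul_zero |k1|]; exact hexp.const_mul |k1|)
      filter_upwards [eventually_ge_atTop 1] with x hx
      exact hwγ x hx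
    have h2 := (h1.sub (a_qm μ j q q' hq)).abs
    rw [sub_zero] at h2
    have h3 := h2.eventually_const_le (half_lt_self (abs_pos.2 hγ))
    obtain ⟨X, hX⟩ := (h3.and (eventually_ge_atTop 1)).exists_forall_of_atTop
    refine u_L2 μ u hu_L2 (|γ| / 2 / (2 * c)) X (by positivity) fun x hx => ?_
    obtain ⟨h4, h5⟩ := hX x hx
    have hx0 : 0 < x := by linarith
    have hm := hmp x hx0.le
    have hm1 : 1 ≤ uM μ j x := (Real.one_le_exp hx0.le).trans (uM_ge μ j x hx0.le)
    rw [← sub_div, ← hu x hx0, abs_div, abs_of_pos hm, abs_mul, abs_of_pos (by positivity : 0 < 2 * c),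
      le_div_iff₀ hm] at h4
    rw [div_le_iff₀ (by positivity)]
    have : |γ| / 2 * 1 ≤ |γ| / 2 * uM μ j x := by gcongr
    linarith
  subst hγ
  obtain ⟨k2, X, C, hX1, hC, hL, hk2, hz⟩ := a_z μ j q q' hq
  -- k2 = 0
  have hk20 : k2 = 0 := by
    by_contra hk
    obtain ⟨Y0, hY0⟩ := ((b_decay μ j (k2 ^ 2) (by positivity)).and
      ((b_pdecay μ j k1).and (eventually_ge_atTop X))).exists_forall_of_atTop
    set Y := max Y0 X
    have hYX : X ≤ Y := le_max_right _ _
    have hY : ∀ x ≥ Y, Y0 ≤ x := fun x hx => (le_max_left _ _).trans hx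
    have hlpos : ∀ x ≥ X, 0 < |uL μ j x| := fun x hx =>
      (mul_pos hC (Real.exp_pos _)).trans_le (hL x hx)
    have hcmp := u_cmp Y (fun x => Real.exp (3 / 2 * x)) (fun x => 3 / 2 * Real.exp (3 / 2 * x))
      (fun x => k2 * (q x / uL μ j x)) (fun x => k2 * (k2 / (x ^ (μ + 1) * uL μ j x ^ 2)))
      (fun x hx => by
        have := ((hasDerivAt_id x).const_mul (3 / 2 : ℝ)).exp
        refine this.congr_deriv ?_
        simp; ring)
      (fun x hx => (hz x (hYX.trans hx)).const_mul k2)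
      (fun x hx => by
        have h1 := (hY0 x (hY x hx)).1
        have h2 := hlpos x (hYX.trans hx)
        have hx0 : 0 < x := one_pos.trans_le (hX1.trans (hYX.trans hx))
        have h3 : 0 < uL μ j x ^ 2 := by rw [← sq_abs]; positivity
        rw [← mul_div_assoc, le_div_iff₀ (by positivity)]
        linarith)
    set Z := Real.exp (3 / 2 * Y) - k2 * (q Y / uL μ j Y) with hZ
    have hev : ∀ᶠ x : ℝ in atTop, C * (Real.exp (x / 2) - |Z|) ≥ 2 * |k2| := by
      have : Tendsto (fun x : ℝ => C * (Real.exp (x / 2) - |Z|)) atTop atTop := by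
        refine Tendsto.const_mul_atTop hC ?_
        exact tendsto_atTop_add_const_right _ _
          (Real.tendsto_exp_atTop.comp (tendsto_id.atTop_div_const two_pos))
      exact this.eventually_ge_atTop _
    obtain ⟨W, hW⟩ := (hev.and (eventually_ge_atTop Y)).exists_forall_of_atTop
    refine u_L2 μ u hu_L2 (1 / (2 * c)) W (by positivity) fun x hx => ?_
    obtain ⟨h1, h2⟩ := hW x hx
    have hx0 : 0 < x := one_pos.trans_le (hX1.trans (hYX.trans h2))
    have hx1 : 1 ≤ x := hX1.trans (hYX.trans h2)
    have hl := hlpos x (hYX.trans h2)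
    have hl' := abs_pos.1 hl
    have h3 := hcmp x h2
    have h4 : Real.exp (3 / 2 * x) - |Z| ≤ |k2| * |q x| / |uL μ j x| := by
      have h5 : k2 * (q x / uL μ j x) ≤ |k2| * |q x| / |uL μ j x| := by
        refine (le_abs_self _).trans (le_of_eq ?_)
        rw [abs_mul, abs_div, mul_div_assoc]
      have := le_abs_self Z
      rw [hZ] at this ⊢
      linarith
    have h6 : C * (Real.exp (x / 2) - |Z|) ≤ |k2| * |q x| := by
      rw [le_div_iff₀ hl] at h4
      have h7 : C * Real.exp (-x) * (Real.exp (3 / 2 * x) - |Z|)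
          ≤ |uL μ j x| * (Real.exp (3 / 2 * x) - |Z|) ∨ Real.exp (3 / 2 * x) - |Z| ≤ 0 := by
        rcases le_or_gt (Real.exp (3 / 2 * x) - |Z|) 0 with h | h
        · exact Or.inr h
        · exact Or.inl (mul_le_mul_of_nonneg_right (hL x (hYX.trans h2)) h.le)
      have h8 : Real.exp (x / 2) ≤ Real.exp (3 / 2 * x) := Real.exp_le_exp.2 (by linarith)
      rcases h7 with h7 | h7
      · have h9 : Real.exp (-x) * Real.exp (3 / 2 * x) = Real.exp (x / 2) := by
          rw [← Real.exp_add]; congr 1; ring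
        have h10 : Real.exp (-x) ≤ 1 := Real.exp_le_one_iff.2 (by linarith)
        have h11 : Real.exp (-x) * |Z| ≤ 1 * |Z| := by gcongr
        have h12 : C * (Real.exp (x / 2) - |Z|) ≤ C * Real.exp (-x) * (Real.exp (3 / 2 * x) - |Z|) := by
          rw [mul_assoc, mul_sub (Real.exp (-x)), h9]
          refine mul_le_mul_of_nonneg_left ?_ hC.le
          linarith
        linarith
      · have : C * (Real.exp (x / 2) - |Z|) ≤ 0 :=
          mul_nonpos_of_nonneg_of_nonpos hC.le (by linarith)
        exact this.trans (by positivity)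
    have hk' : 0 < |k2| := abs_pos.2 hk
    have h13 : 2 ≤ |q x| := by
      have : 2 * |k2| ≤ |k2| * |q x| := h1.le.trans h6
      by_contra h
      push Not at h
      nlinarith
    have h14 : |p x| ≤ 1 := by
      have h15 := hwγ x hx1
      have hm := hmp x hx0.le
      rw [sub_zero, abs_div, abs_of_pos hm, div_le_iff₀ hm] at h15
      exact h15.trans (hY0 x (hY x h2)).2.1
    rw [div_le_iff₀ (by positivity)]
    have h16 := hu x hx0
    have h17 : |u x| * (2 * c) = |p x - q x| := by
      rw [← h16, abs_mul, abs_of_pos (by positivity : 0 < 2 * c)]; ring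
    rw [h17]
    have := abs_sub_abs_le_abs_sub (q x) (p x)
    rw [abs_sub_comm] at this
    linarith
  subst hk20
  -- q is a multiple of ℓ
  have hl0 : ∀ x ≥ X, uL μ j x ≠ 0 := fun x hx =>
      abs_pos.1 ((mul_pos hC (Real.exp_pos _)).trans_le (hL x hx))
  set a := q X / uL μ j X with ha
  have hX0 : 0 < X := one_pos.trans_le hX1
  have hqa : ∀ x > 0, q x = a * uL μ j x := by
    intro x hx
    rcases le_total x X with h | h
    · have h1 := u_unique μ _ _ _ (uSol_lin μ _ a _ _ _ _ hq (uL_sol μ j)) X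
        (by rw [ha]; field_simp [hl0 X le_rfl]; ring) (by
          have h2 := hk2 X hX0
          have h3 : q' X * uL μ j X - q X * uL' μ j X = 0 := by
            rcases mul_eq_zero.1 h2 with h | h
            · exact absurd h (by positivity)
            · exact h
          have h4 := hl0 X le_rfl
          rw [ha]; field_simp; linarith) x hx h
      linarith
    · have h1 := u_cmp_abs X _ _ (fun _ => (0:ℝ)) (fun _ => 0) hz (fun x _ => hasDerivAt_const x 0)
        (fun x _ => by simp) x h
      simp only [sub_self, abs_nonpos_iff] at h1
      have h2 : q x / uL μ j x = a := by rw [ha]; linarith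
      rw [← h2]
      have := hl0 x h
      field_simp
  -- k1 = 0
  have hid : Tendsto (fun x : ℝ => x) (nhdsWithin 0 (Ioi 0)) (nhds 0) :=
    tendsto_id.mono_left nhdsWithin_le_nhds
  have hpos : ∀ᶠ x : ℝ in nhdsWithin 0 (Ioi 0), 0 < x := self_mem_nhdsWithin
  have hwlim : ∃ D, Tendsto (fun x => p x / uM μ j x) (nhdsWithin 0 (Ioi 0)) (nhds D) := by
    have h1 : Tendsto (fun x => (2 * c * u x + a * uL μ j x) / uM μ j x) (nhdsWithin 0 (Ioi 0))
        (nhds ((2 * c * B + a * uL μ j 0) / uM μ j 0)) := by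
      refine ((hB.const_mul _).add (((uL_cont μ j).tendsto 0).comp hid |>.const_mul a)).div
        (((uM_cont μ j).tendsto 0).comp hid) (hmp 0 le_rfl).ne'
    refine ⟨_, h1.congr' ?_⟩
    filter_upwards [hpos] with x hx
    rw [hu x hx, ← hqa x hx]; ring
  have hk10 : k1 = 0 := by
    by_contra hk
    obtain ⟨D, hD⟩ := hwlim
    obtain ⟨M, hM⟩ := (isCompact_Icc (a := (0:ℝ)) (b := 1)).bddAbove_image (uM_cont μ j).continuousOn
    have hM' : ∀ x ∈ Icc (0:ℝ) 1, uM μ j x ≤ M := fun x hx => hM ⟨x, hx, rfl⟩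
    have hM0 : 0 < M := (hmp 0 le_rfl).trans_le (hM' 0 (by simp))
    set K := k1 ^ 2 / M ^ 2 with hK
    have hK0 : 0 < K := by positivity
    have hd : ∀ x > 0, HasDerivAt (fun x => k1 * (p x / uM μ j x) + K * x⁻¹)
        (k1 * (k1 / (x ^ (μ + 1) * uM μ j x ^ 2)) + K * (-(x ^ 2)⁻¹)) x := fun x hx =>
      ((hw x hx).const_mul k1).add ((hasDerivAt_inv hx.ne').const_mul K)
    have hmono : MonotoneOn (fun x => k1 * (p x / uM μ j x) + K * x⁻¹) (Ioc 0 1) := by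
      refine monotoneOn_of_deriv_nonneg (convex_Ioc 0 1)
        (fun y hy => (hd y hy.1).continuousAt.continuousWithinAt)
        (fun y hy => ?_) (fun y hy => ?_)
      · rw [interior_Ioc] at hy
        exact (hd y hy.1).differentiableAt.differentiableWithinAt
      · rw [interior_Ioc] at hy
        rw [(hd y hy.1).deriv]
        have hy0 := hy.1
        have h1 : uM μ j y ^ 2 ≤ M ^ 2 := by
          have := hM' y ⟨hy.1.le, hy.2.le⟩
          have := hmp y hy.1.le
          gcongr
        have h2 : y ^ (μ + 1) ≤ y ^ 2 := pow_le_pow_of_le_one hy.1.le hy.2.le (by omega)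
        have hm := hmp y hy.1.le
        have h3 : K * (y ^ 2)⁻¹ ≤ k1 * (k1 / (y ^ (μ + 1) * uM μ j y ^ 2)) := by
          calc K * (y ^ 2)⁻¹ = k1 ^ 2 / (y ^ 2 * M ^ 2) := by rw [hK]; field_simp
            _ ≤ k1 ^ 2 / (y ^ (μ + 1) * uM μ j y ^ 2) := by gcongr
            _ = _ := by ring
        linarith
    have hinv : Tendsto (fun x => k1 * (p x / uM μ j x) + K * x⁻¹) (nhdsWithin 0 (Ioi 0)) atTop :=
      (hD.const_mul k1).add_atTop (tendsto_inv_nhdsGT_zero.const_mul_atTop hK0)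
    have hev := hinv.eventually_gt_atTop (k1 * (p 1 / uM μ j 1) + K * (1:ℝ)⁻¹)
    have hlt1 : ∀ᶠ x : ℝ in nhdsWithin 0 (Ioi 0), x < 1 := hid.eventually_lt_const one_pos
    obtain ⟨x, h1, h2, h3⟩ := (hev.and (hpos.and hlt1)).exists
    have := hmono ⟨h2, h3.le⟩ ⟨one_pos, le_rfl⟩ h3.le
    simp only at this
    linarith
  subst hk10
  have hp0 : ∀ x > 0, p x = 0 := by
    obtain ⟨D, hD⟩ := (isOpen_Ioi (a := (0:ℝ))).exists_is_const_of_deriv_eq_zero isPreconnected_Ioi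
      (fun x hx => (hw x hx).differentiableAt.differentiableWithinAt)
      (fun x hx => by rw [(hw x hx).deriv]; simp)
    have h1 := hwγ 1 le_rfl
    rw [abs_zero, zero_mul, abs_nonpos_iff, sub_zero, hD 1 (mem_Ioi.2 one_pos)] at h1
    intro x hx
    have h2 := hD x hx
    rw [h1, div_eq_zero_iff] at h2
    exact h2.resolve_right (hmp x (le_of_lt hx)).ne'
  refine ⟨-a / (2 * c), fun x hx => ?_⟩
  have h1 := hu x hx
  rw [hp0 x hx, hqa x hx] at h1
  field_simp
  linarith


lemma v_u (μ : ℕ) (hμ1 : 1 ≤ μ) (j : ℕ) (u : ℝ → ℝ)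
    (hu_smooth : ContDiffOn ℝ (⊤ : ℕ∞) u (Set.Ioi 0))
    (hu_L2 : MeasureTheory.IntegrableOn
      (fun x => u x ^ 2 * x ^ (μ : ℝ)) (Set.Ioi 0))
    (hu_eig : ∀ x > (0 : ℝ), Dop μ (-1) u x = 4 * j * (j + (μ : ℝ) + 1) * u x)
    (B : ℝ) (hB : Filter.Tendsto u (nhdsWithin 0 (Set.Ioi 0)) (nhds B)) :
    ∃ α : ℝ, (∀ x > 0, u x = α * (Real.exp (-x) * lag μ j (2 * x))) ∧
      B = α * ((j + μ).choose μ : ℝ) := by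
  obtain ⟨s1, h1⟩ := u_deriv hu_smooth
  obtain ⟨s2, h2⟩ := u_deriv s1
  obtain ⟨s3, h3⟩ := u_deriv s2
  obtain ⟨s4, h4⟩ := u_deriv s3
  have hp := u_split μ (2 * j + μ + 1) (4 * j * (j + (μ : ℝ) + 1)) (by ring) _ _ _ _ _ h1 h2 h3 h4 hu_eig
  have hq := u_split μ (-(2 * j + μ + 1)) (4 * j * (j + (μ : ℝ) + 1)) (by ring) _ _ _ _ _ h1 h2 h3 h4
    hu_eig
  obtain ⟨α, hα⟩ := b_main μ j hμ1 u _ _ _ _ hp hq (fun x _ => by ring) hu_L2 B hB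
  refine ⟨α, fun x hx => ?_, ?_⟩
  · rw [hα x hx, uL, lagP_eval]
  · have h5 : Tendsto (fun x => α * uL μ j x) (nhdsWithin 0 (Ioi 0)) (nhds (α * uL μ j 0)) :=
      ((uL_cont μ j).tendsto 0).mono_left nhdsWithin_le_nhds |>.const_mul α
    have h6 : Tendsto u (nhdsWithin 0 (Ioi 0)) (nhds (α * uL μ j 0)) := by
      refine h5.congr' ?_
      filter_upwards [self_mem_nhdsWithin] with x hx
      exact (hα x hx).symm
    rw [tendsto_nhds_unique hB h6, uL, lagP_eval, lag, Finset.sum_range_succ']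
    simp

lemma v_const (N j : ℕ) :
    ((j + (2 * N + 1)).choose (2 * N + 1) : ℝ) * (j.factorial * (2 : ℝ) ^ (2 * ((2 * N + 1 : ℕ) : ℝ) - 1)
        * Real.Gamma ((((2 * N + 1 : ℕ) : ℝ) + 2) / 2) * Real.Gamma ((((2 * N + 1 : ℕ) : ℝ) + 1) / 2)
        * Real.Gamma (j + (((2 * N + 1 : ℕ) : ℝ) + 3) / 2))
      / (Real.Gamma (j + (((2 * N + 1 : ℕ) : ℝ) + 1) / 2) * Real.pi
        * Real.Gamma (j + ((2 * N + 1 : ℕ) : ℝ) + 1)) * (-2 / Real.Gamma (-(1 / 2)))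
      = 4 ^ N * (2 / √π) / √π * ((j + N + 1 : ℝ) / 2) := by
  have g1 : Real.Gamma (-(1 / 2)) = -2 * √π := by
    have := Real.Gamma_add_one (s := -(1 / 2)) (by norm_num)
    rw [show (-(1 / 2) + 1 : ℝ) = 1 / 2 by norm_num, Real.Gamma_one_half_eq] at this
    linarith
  have g2 : Real.Gamma (j + (((2 * N + 1 : ℕ) : ℝ) + 1) / 2) = (j + N).factorial := by
    rw [← Real.Gamma_nat_eq_factorial]; congr 1; push_cast; ring
  have g3 : Real.Gamma (j + (((2 * N + 1 : ℕ) : ℝ) + 3) / 2) = (j + N + 1) * (j + N).factorial := by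
    have := Real.Gamma_nat_eq_factorial (j + N + 1)
    rw [Nat.factorial_succ] at this
    push_cast at this
    rw [← this]; congr 1; push_cast; ring
  have g4 : Real.Gamma (j + ((2 * N + 1 : ℕ) : ℝ) + 1) = (j + (2 * N + 1)).factorial := by
    rw [← Real.Gamma_nat_eq_factorial]; congr 1; push_cast; ring
  have g5 : Real.Gamma ((((2 * N + 1 : ℕ) : ℝ) + 2) / 2) * Real.Gamma ((((2 * N + 1 : ℕ) : ℝ) + 1) / 2)
      = (2 * N + 1).factorial * √π / 2 ^ (2 * N + 1) := by
    have := Real.Gamma_mul_Gamma_add_half ((N : ℝ) + 1)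
    rw [show 2 * ((N : ℝ) + 1) = ((2 * N + 1 : ℕ) : ℝ) + 1 by push_cast; ring,
      Real.Gamma_nat_eq_factorial (2 * N + 1), show (1 : ℝ) - (((2 * N + 1 : ℕ) : ℝ) + 1)
        = -((2 * N + 1 : ℕ) : ℝ) by ring, Real.rpow_neg (by norm_num), Real.rpow_natCast] at this
    rw [mul_comm, show (((2 * N + 1 : ℕ) : ℝ) + 1) / 2 = (N : ℝ) + 1 by push_cast; ring,
      show (((2 * N + 1 : ℕ) : ℝ) + 2) / 2 = (N : ℝ) + 1 + 1 / 2 by push_cast; ring, this]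
    field_simp
  have g6 : (2 : ℝ) ^ (2 * ((2 * N + 1 : ℕ) : ℝ) - 1) = 2 ^ (4 * N + 1) := by
    rw [← Real.rpow_natCast]; congr 1; push_cast; ring
  have g7 : ((j + (2 * N + 1)).choose (2 * N + 1) : ℝ) * (j.factorial * (2 * N + 1).factorial)
      = (j + (2 * N + 1)).factorial := by
    have := Nat.add_choose_mul_factorial_mul_factorial j (2 * N + 1)
    rw [← mul_assoc]; exact_mod_cast this
  rw [g1, g2, g3, g4, g6, mul_assoc (j.factorial * _ : ℝ), g5]
  have e1 : ((j + N).factorial : ℝ) ≠ 0 := by positivity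
  have e2 : ((j + (2 * N + 1)).factorial : ℝ) ≠ 0 := by positivity
  have e3 : √π ≠ 0 := by positivity
  have e4 : π = √π * √π := (Real.mul_self_sqrt pi_pos.le).symm
  have e5 : (2:ℝ) ^ (4 * N + 1) = 4 ^ N * 2 ^ (2 * N + 1) := by
    rw [show (4:ℝ) = 2 ^ 2 by norm_num, ← pow_mul, ← pow_add]; congr 1; ring
  generalize √π = r at *
  rw [e4, e5]
  field_simp
  linear_combination g7

/-- **Theorem B, case `ν = −1`.** -/
theorem theoremB_nu_neg_one (μ : ℕ) (hμ : Odd μ) (hμ1 : 1 ≤ μ) (j : ℕ) (u : ℝ → ℝ)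
    (hu_smooth : ContDiffOn ℝ (⊤ : ℕ∞) u (Set.Ioi 0))
    (hu_L2 : MeasureTheory.IntegrableOn
      (fun x => u x ^ 2 * x ^ (μ : ℝ)) (Set.Ioi 0))
    (hu_eig : ∀ x > (0 : ℝ), Dop μ (-1) u x = 4 * j * (j + (μ : ℝ) + 1) * u x)
    (B : ℝ) (hB : Filter.Tendsto u (nhdsWithin 0 (Set.Ioi 0)) (nhds B)) :
    ∀ ϑ ∈ Set.Icc (0 : ℝ) Real.pi, ∀ φ ∈ Set.Icc (0 : ℝ) Real.pi,
      Real.cos ϑ + Real.cos φ > 0 →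
      ∫ x in Set.Ioi (0 : ℝ),
          u x * besselJt ((μ : ℝ) / 2) (Real.sin ϑ / (Real.cos ϑ + Real.cos φ) * x)
            * besselJt (-(1 / 2)) (Real.sin φ / (Real.cos ϑ + Real.cos φ) * x)
            * x ^ (μ : ℝ)
        = ((-1) ^ j * (j.factorial * (2 : ℝ) ^ (2 * (μ : ℝ) - 1)
                * Real.Gamma (((μ : ℝ) + 2) / 2) * Real.Gamma (((μ : ℝ) + 1) / 2)
                * Real.Gamma (j + ((μ : ℝ) + 3) / 2))
              / (Real.Gamma (j + ((μ : ℝ) + 1) / 2) * Real.pi * Real.Gamma (j + (μ : ℝ) + 1))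
              * (-2 / Real.Gamma (-(1 / 2))) * B)
            * ((Real.cos ϑ + Real.cos φ) / 2) ^ (((μ : ℝ) + 1) / 2)
            * gegenbauerCt j (((μ : ℝ) + 1) / 2) (Real.cos ϑ)
            * gegenbauerCt (j + (μ + 1) / 2) 0 (Real.cos φ) := by

  intro ϑ hϑ φ hφ hS
  obtain ⟨N, rfl⟩ := hμ
  obtain ⟨α, hα, hBα⟩ := v_u (2 * N + 1) hμ1 j u hu_smooth hu_L2 hu_eig B hB
  have hI := I_final ϑ φ hS N j
  set S := Real.cos ϑ + Real.cos φ with hSd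
  have h1 : ∫ x in Set.Ioi (0 : ℝ),
          u x * besselJt (((2 * N + 1 : ℕ) : ℝ) / 2) (Real.sin ϑ / S * x)
            * besselJt (-(1 / 2)) (Real.sin φ / S * x)
            * x ^ ((2 * N + 1 : ℕ) : ℝ)
      = ∫ x in Set.Ioi (0 : ℝ), (α / √π) * (Real.exp (-x) * lag (2 * N + 1) j (2 * x)
        * bF N (Real.sin ϑ / S) x * Real.cos (Real.sin φ / S * x)) := by
    refine setIntegral_congr_fun measurableSet_Ioi fun x hx => ?_
    rw [besselJt_eq (N + 1) (((2 * N + 1 : ℕ) : ℝ) / 2) _ (by push_cast; ring),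
      besselJt_eq 0 (-(1 / 2)) _ (by norm_num), bphi_zero, Real.rpow_natCast, hα x hx, bF, bJ]
    ring
  rw [h1, integral_const_mul, hI]
  have h2 := ge_zero_cos φ (j + N)
  have h3 : j + (2 * N + 1 + 1) / 2 = j + N + 1 := by omega
  have h4 : (((2 * N + 1 : ℕ) : ℝ) + 1) / 2 = ((N + 1 : ℕ) : ℝ) := by push_cast; ring
  rw [h3]
  have h5 : Real.cos ((j + N + 1) * φ)
      = ((j + N + 1 : ℝ) / 2) * gegenbauerCt (j + N + 1) 0 (Real.cos φ) := by
    push_cast at h2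
    linarith
  have h6 : (S / 2) ^ ((((2 * N + 1 : ℕ) : ℝ) + 1) / 2) = (S / 2) ^ (N + 1) := by
    rw [h4, Real.rpow_natCast]
  have h7 : gegenbauerCt j ((((2 * N + 1 : ℕ) : ℝ) + 1) / 2) (Real.cos ϑ)
      = gegenbauerCt j (N + 1 : ℕ) (Real.cos ϑ) := by rw [h4]
  rw [h6, h7, h5, hBα]
  have hc := v_const N j
  linear_combination (-(α * (-1) ^ j * (S / 2) ^ (N + 1) * gegenbauerCt j (N + 1 : ℕ) (Real.cos ϑ)
    * gegenbauerCt (j + N + 1) 0 (Real.cos φ))) * hc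
end

section
/- (Corollary C, cosine version) Let μ ≥ 1 be an odd integer, j ∈ ℕ, and ϑ, φ ∈ [0,π] with cos ϑ + cos φ > 0. Set a = sin ϑ/(cos ϑ + cos φ) and b = sin φ/(cos ϑ + cos φ). Then ∫₀^∞ L_j^μ(2x) J̃_{μ/2}(ax) cos(bx) x^μ e^{−x} dx = (−1)^j · (2^μ/√π) · ((cos ϑ + cos φ)/2)^{(μ+1)/2} · cos((j+(μ+1)/2)φ) · C̃_j^{(μ+1)/2}(cos ϑ). -/
open MeasureTheory Real Filter Set Metric

set_option linter.unusedSimpArgs false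

lemma hasSum_congr2 {E : Type*} [AddCommMonoid E] [TopologicalSpace E] {f f' : ℕ → E} {a a' : E}
    (h : HasSum f a) (hf : ∀ i, f' i = f i) (ha : a' = a) : HasSum f' a' := by
  rw [ha, show f' = f from funext hf]; exact h

lemma dbl_sum (c : ℕ) (hc : 1 ≤ c) (g : ℕ × ℕ → ℂ) (R : ℕ → ℂ) (Rn : ℕ → ℝ) (S : ℂ)
    (hn : ∀ k, HasSum (fun i => ‖g (k, i)‖) (Rn k)) (hRn : Summable Rn)
    (hR : ∀ k, HasSum (fun i => g (k, i)) (R k)) (hS : HasSum R S) :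
    HasSum (fun j => ∑ k ∈ Finset.range (j / c + 1), g (k, j - c * k)) S := by
  have hsum : Summable g := by
    apply Summable.of_norm
    rw [summable_prod_of_nonneg (fun p => norm_nonneg _)]
    refine ⟨fun k => (hn k).summable, ?_⟩
    simpa only [(hn _).tsum_eq] using hRn
  have h1 : HasSum g S := by
    have := hsum.hasSum.prod_fiberwise hR
    rw [hS.unique this]
    exact hsum.hasSum
  have h2 := h1.tsum_fiberwise (fun p : ℕ × ℕ => p.2 + c * p.1)
  refine hasSum_congr2 h2 (fun j => ?_) rfl
  have hset : ((fun p : ℕ × ℕ => p.2 + c * p.1) ⁻¹' {j})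
      = (((Finset.range (j / c + 1)).image (fun k => (k, j - c * k)) : Finset (ℕ × ℕ)) : Set (ℕ × ℕ)) := by
    ext ⟨k, m⟩
    simp only [Set.mem_preimage, Set.mem_singleton_iff, Finset.coe_image, Set.mem_image,
      Finset.coe_range, Set.mem_Iio, Prod.mk.injEq, Order.lt_add_one_iff]
    constructor
    · intro h
      refine ⟨k, ?_, rfl, by omega⟩
      rw [Nat.le_div_iff_mul_le hc]
      nlinarith
    · rintro ⟨k', hk, rfl, rfl⟩
      rw [Nat.le_div_iff_mul_le hc, mul_comm] at hk
      omega
  rw [hset, Finset.tsum_subtype' , Finset.sum_image]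
  intro x _ y _ h
  exact (Prod.ext_iff.1 h).1

lemma laguerre_gen (μ : ℕ) (x : ℝ) (t : ℂ) (ht : ‖t‖ < 1) :
    HasSum (fun j => (laguerreL j μ x : ℂ) * t ^ j)
      (1 / (1 - t) ^ (μ + 1) * Complex.exp (-(x * t / (1 - t)))) := by
  have h1t : (1 - t) ≠ 0 := by
    intro h
    have : t = 1 := by linear_combination -h
    rw [this] at ht; simp at ht
  have key := dbl_sum 1 le_rfl
    (fun p => (-1) ^ p.1 * ((p.2 + (p.1 + μ)).choose (p.1 + μ) : ℂ) * (x : ℂ) ^ p.1 / p.1.factorial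
      * t ^ (p.1 + p.2))
    (fun k => (1 / (1 - t) ^ (μ + 1)) * ((-(x * t / (1 - t))) ^ k / k.factorial))
    (fun k => (1 / (1 - ‖t‖) ^ (μ + 1)) * ((|x| * ‖t‖ / (1 - ‖t‖)) ^ k / k.factorial))
    (1 / (1 - t) ^ (μ + 1) * Complex.exp (-(x * t / (1 - t)))) ?_ ?_ ?_ ?_
  · refine hasSum_congr2 key (fun j => ?_) rfl
    rw [laguerreL, Nat.div_one]
    push_cast
    rw [Finset.sum_mul]
    refine Finset.sum_congr rfl fun k hk => ?_
    have hk' : k ≤ j := by simpa [Nat.lt_succ_iff] using hk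
    obtain ⟨i, rfl⟩ := Nat.exists_eq_add_of_le hk'
    have : (k + i + μ).choose (k + i - k) = (i + (k + μ)).choose (k + μ) := by
      rw [show k + i - k = i by omega, show k + i + μ = i + (k + μ) by ring, Nat.choose_symm_add]
    simp only [this, one_mul]
    rw [show k + i - k = i by omega]
  · intro k
    have h := (hasSum_choose_mul_geometric_of_norm_lt_one (𝕜 := ℝ) (k + μ) (r := ‖t‖)
      (by simpa using ht)).mul_left (|x| ^ k / k.factorial * ‖t‖ ^ k)
    refine hasSum_congr2 h (fun i => ?_) ?_
    · simp only [norm_mul, norm_div, norm_pow, norm_neg, norm_one, one_pow, one_mul,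
        Complex.norm_natCast, Complex.norm_real, Real.norm_eq_abs]
      ring
    · have : (1 - ‖t‖) ≠ 0 := by linarith
      rw [div_pow, mul_pow]
      field_simp
      ring
  · exact (Real.summable_pow_div_factorial _).mul_left _
  · intro k
    have h := (hasSum_choose_mul_geometric_of_norm_lt_one (𝕜 := ℂ) (k + μ) ht).mul_left
      ((-1) ^ k * (x : ℂ) ^ k / k.factorial * t ^ k)
    refine hasSum_congr2 h (fun i => ?_) ?_
    · ring
    · have : (k.factorial : ℂ) ≠ 0 := by exact_mod_cast k.factorial_ne_zero
      rw [neg_pow (_ : ℂ) k, div_pow, mul_pow]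
      field_simp
      ring
  · rw [Complex.exp_eq_exp_ℂ]
    have h := NormedSpace.expSeries_div_hasSum_exp (𝔸 := ℂ) (-(x * t / (1 - t)))
    exact h.mul_left (1 / (1 - t) ^ (μ + 1))

lemma gegen_gen (n : ℕ) (y : ℝ) (hy : |y| ≤ 1) (t : ℂ) (ht : ‖t‖ < 1 / 4) :
    HasSum (fun j => (gegenbauerCt j (n + 1) y : ℂ) * t ^ j)
      (n.factorial / (1 - 2 * y * t + t ^ 2) ^ (n + 1)) := by
  set A : ℂ := 2 * y * t with hA
  have hAn : ‖A‖ = 2 * |y| * ‖t‖ := by simp [hA]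
  have hA1 : ‖A‖ < 1 / 2 := by rw [hAn]; nlinarith [norm_nonneg t, abs_nonneg y]
  have h1A : 1 - A ≠ 0 := by
    intro h
    have : A = 1 := by linear_combination -h
    rw [this] at hA1; norm_num at hA1
  have hB : ‖t‖ ^ 2 / (1 - ‖A‖) < 1 := by
    rw [div_lt_one (by linarith)]
    nlinarith [norm_nonneg t]
  have hB' : ‖-t ^ 2 / (1 - A)‖ < 1 := by
    refine lt_of_le_of_lt ?_ hB
    rw [norm_div, norm_neg, norm_pow]
    gcongr
    · linarith
    · simpa using norm_sub_norm_le 1 A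
  have key := dbl_sum 2 (by norm_num)
    (fun p => (-1) ^ p.1 * ((n + p.2 + p.1).factorial : ℂ) / (p.1.factorial * p.2.factorial)
      * A ^ p.2 * t ^ (2 * p.1))
    (fun k => (n.factorial / (1 - A) ^ (n + 1)) * (((k + n).choose n) * (-t ^ 2 / (1 - A)) ^ k))
    (fun k => (n.factorial / (1 - ‖A‖) ^ (n + 1)) *
      (((k + n).choose n) * (‖t‖ ^ 2 / (1 - ‖A‖)) ^ k))
    (n.factorial / (1 - A + t ^ 2) ^ (n + 1)) ?_ ?_ ?_ ?_
  · refine hasSum_congr2 key (fun j => ?_) rfl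
    rw [gegenbauerCt]
    push_cast
    rw [Finset.sum_mul]
    refine Finset.sum_congr rfl fun k hk => ?_
    have hk' : 2 * k ≤ j := by
      have := Finset.mem_range.1 hk
      omega
    obtain ⟨m, rfl⟩ := Nat.exists_eq_add_of_le hk'
    have e1 : 2 * k + m - 2 * k = m := by omega
    have : Real.Gamma ((n : ℝ) + 1 + ((2 * k + m : ℕ) : ℝ) - k) = (n + m + k).factorial := by
      rw [← Real.Gamma_nat_eq_factorial]
      congr 1
      push_cast; ring
    rw [e1, this, hA]
    push_cast
    ring
  · intro k
    have h := (hasSum_choose_mul_geometric_of_norm_lt_one (𝕜 := ℝ) (n + k) (r := ‖A‖)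
      (by rw [norm_norm]; linarith)).mul_left ((n + k).factorial / k.factorial * ‖t‖ ^ (2 * k))
    refine hasSum_congr2 h (fun i => ?_) ?_
    · have : ((n + i + k).factorial : ℝ) = (i + (n + k)).choose (n + k) * i.factorial * (n + k).factorial := by
        rw [show n + i + k = i + (n + k) by ring, ← Nat.add_choose_mul_factorial_mul_factorial i (n + k)]
        push_cast
        rw [← Nat.choose_symm_add]
      simp only [norm_mul, norm_div, norm_pow, norm_neg, norm_one, one_pow, one_mul,
        Complex.norm_natCast]
      rw [this]
      field_simp
    · have h1 : (1 - ‖A‖) ≠ 0 := by linarith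
      have : ((n + k).factorial : ℝ) = (k + n).choose n * k.factorial * n.factorial := by
        rw [add_comm n k, ← Nat.add_choose_mul_factorial_mul_factorial k n]
        push_cast
        rw [← Nat.choose_symm_add]
      rw [this, div_pow]
      field_simp
      ring
  · apply Summable.mul_left
    exact (hasSum_choose_mul_geometric_of_norm_lt_one (𝕜 := ℝ) n
      (by rw [Real.norm_eq_abs, abs_of_nonneg (div_nonneg (by positivity) (by linarith))]
          exact hB)).summable
  · intro k
    have h := (hasSum_choose_mul_geometric_of_norm_lt_one (𝕜 := ℂ) (n + k) (r := A)
      (by linarith)).mul_left ((-1) ^ k * ((n + k).factorial / k.factorial) * t ^ (2 * k))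
    refine hasSum_congr2 h (fun i => ?_) ?_
    · have : ((n + i + k).factorial : ℂ) = (i + (n + k)).choose (n + k) * i.factorial * (n + k).factorial := by
        rw [show n + i + k = i + (n + k) by ring, ← Nat.add_choose_mul_factorial_mul_factorial i (n + k)]
        push_cast
        rw [← Nat.choose_symm_add]
      simp only []
      rw [this]
      have : (i.factorial : ℂ) ≠ 0 := by exact_mod_cast i.factorial_ne_zero
      field_simp
    · have : ((n + k).factorial : ℂ) = (k + n).choose n * k.factorial * n.factorial := by
        rw [add_comm n k, ← Nat.add_choose_mul_factorial_mul_factorial k n]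
        push_cast
        rw [← Nat.choose_symm_add]
      rw [this]
      have : (k.factorial : ℂ) ≠ 0 := by exact_mod_cast k.factorial_ne_zero
      rw [div_pow, neg_pow]
      field_simp
      ring
  · have h := (hasSum_choose_mul_geometric_of_norm_lt_one (𝕜 := ℂ) n hB').mul_left
      ((n.factorial : ℂ) / (1 - A) ^ (n + 1))
    refine hasSum_congr2 h (fun i => rfl) ?_
    rw [show 1 - -t ^ 2 / (1 - A) = (1 - A + t ^ 2) / (1 - A) by field_simp; ring, div_pow]
    by_cases h0 : (1 - A + t ^ 2) = 0
    · simp [h0]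
    · field_simp

lemma coeff_unique (u v : ℕ → ℂ) (F : ℂ → ℂ) (r : ℝ) (hr : 0 < r)
    (hu : ∀ t : ℂ, ‖t‖ < r → HasSum (fun j => u j * t ^ j) (F t))
    (hv : ∀ t : ℂ, ‖t‖ < r → HasSum (fun j => v j * t ^ j) (F t)) : u = v := by
  have aux : ∀ w : ℕ → ℂ, (∀ t : ℂ, ‖t‖ < r → HasSum (fun j => w j * t ^ j) (F t)) →
      HasFPowerSeriesAt F (FormalMultilinearSeries.ofScalars ℂ w) 0 := by
    intro w hw
    rw [hasFPowerSeriesAt_iff]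
    filter_upwards [Metric.ball_mem_nhds (0 : ℂ) hr] with t ht
    have := hw t (by simpa using ht)
    simpa [FormalMultilinearSeries.coeff_ofScalars, mul_comm] using this
  have h := (aux u hu).eq_formalMultilinearSeries (aux v hv)
  ext j
  have := congrArg (fun p => FormalMultilinearSeries.coeff p j) h
  simpa [FormalMultilinearSeries.coeff_ofScalars] using this

lemma gamma_dup (k : ℕ) :
    (k.factorial : ℝ) * Real.Gamma (k + 3 / 2)
      = (2 * k + 1).factorial * Real.sqrt Real.pi / 2 ^ (2 * k + 1) := by
  have h := Real.Gamma_mul_Gamma_add_half ((k : ℝ) + 1)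
  rw [Real.Gamma_nat_eq_factorial, show (k : ℝ) + 1 + 1 / 2 = k + 3 / 2 by ring,
    show 2 * ((k : ℝ) + 1) = ((2 * k + 1 : ℕ) : ℝ) + 1 by push_cast; ring,
    Real.Gamma_nat_eq_factorial,
    show 1 - (((2 * k + 1 : ℕ) : ℝ) + 1) = -((2 * k + 1 : ℕ) : ℝ) by ring,
    Real.rpow_neg (by norm_num), Real.rpow_natCast] at h
  rw [h]; ring

lemma gamma_dup0 (k : ℕ) :
    (k.factorial : ℝ) * Real.Gamma (k + 1 / 2)
      = (2 * k).factorial * Real.sqrt Real.pi / 2 ^ (2 * k) := by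
  have h := Real.Gamma_mul_Gamma_add_half ((k : ℝ) + 1 / 2)
  rw [show (k : ℝ) + 1 / 2 + 1 / 2 = k + 1 by ring, Real.Gamma_nat_eq_factorial,
    show 2 * ((k : ℝ) + 1 / 2) = ((2 * k : ℕ) : ℝ) + 1 by push_cast; ring,
    Real.Gamma_nat_eq_factorial,
    show 1 - (((2 * k : ℕ) : ℝ) + 1) = -((2 * k : ℕ) : ℝ) by ring,
    Real.rpow_neg (by norm_num), Real.rpow_natCast] at h
  rw [mul_comm, h]; ring

/-- terms of the Bessel series -/
noncomputable def bt (α x : ℝ) (m : ℕ) : ℝ :=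
  (-1) ^ m / (m.factorial * Real.Gamma (m + α + 1)) * (x / 2) ^ (2 * m)

lemma bt_norm (α : ℝ) (hα : -1 < α) (x : ℝ) (m : ℕ) :
    ‖bt α x m‖ = 1 / (m.factorial * Real.Gamma (m + α + 1)) * (|x| / 2) ^ (2 * m) := by
  have hG : 0 < Real.Gamma (m + α + 1) := Real.Gamma_pos_of_pos (by
    have : (0 : ℝ) ≤ m := Nat.cast_nonneg m
    linarith)
  rw [bt, norm_mul, norm_div, norm_pow, norm_pow, norm_neg, norm_one, one_pow, norm_mul, norm_div]
  simp only [Real.norm_eq_abs, Nat.abs_cast, abs_of_pos hG, abs_two]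

lemma bt_zero (x : ℝ) : HasSum (bt (-1 / 2) x) (Real.cos x / Real.sqrt Real.pi) := by
  refine hasSum_congr2 ((Real.hasSum_cos x).div_const (Real.sqrt Real.pi)) (fun m => ?_) rfl
  rw [bt, show (m : ℝ) + -1 / 2 + 1 = m + 1 / 2 by ring, gamma_dup0]
  have : Real.sqrt Real.pi ≠ 0 := by positivity
  rw [div_pow]
  field_simp

lemma bt_one (x : ℝ) : HasSum (fun m => x * bt (1 / 2) x m) (2 * Real.sin x / Real.sqrt Real.pi) := by
  refine hasSum_congr2 (((Real.hasSum_sin x).mul_left 2).div_const (Real.sqrt Real.pi)) (fun m => ?_) rfl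
  rw [bt, show (m : ℝ) + 1 / 2 + 1 = m + 3 / 2 by ring, gamma_dup]
  have : Real.sqrt Real.pi ≠ 0 := by positivity
  rw [div_pow]
  field_simp
  ring

lemma bt_step (α : ℝ) (hα : -1 < α) (x : ℝ) (h : Summable (fun m => ‖bt α x m‖)) :
    Summable (fun m => ‖bt (α + 1) x m‖) := by
  refine Summable.of_nonneg_of_le (fun m => norm_nonneg _) (fun m => ?_) (h.mul_left (1 / (α + 1)))
  rw [bt_norm α hα, bt_norm (α + 1) (by linarith)]
  have hm : (0 : ℝ) ≤ m := Nat.cast_nonneg m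
  have hG : 0 < Real.Gamma (m + α + 1) := Real.Gamma_pos_of_pos (by linarith)
  rw [show (m : ℝ) + (α + 1) + 1 = (m + α + 1) + 1 by ring, Real.Gamma_add_one (by linarith),
    ← mul_assoc (1 / (α + 1)), one_div_mul_one_div]
  have hα1 : 0 < α + 1 := by linarith
  refine mul_le_mul_of_nonneg_right (one_div_le_one_div_of_le (by positivity) ?_) (by positivity)
  have : (0 : ℝ) < m.factorial := by positivity
  have h2 : 0 < m.factorial * Real.Gamma (m + α + 1) := by positivity
  nlinarith

lemma bt_summ (n : ℕ) (x : ℝ) : Summable (fun m => ‖bt ((n : ℝ) - 1 / 2) x m‖) := by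
  induction n with
  | zero =>
    have := (bt_zero x).summable.norm
    simpa [neg_div] using this
  | succ n ih =>
    have := bt_step ((n : ℝ) - 1 / 2) (by linarith [(Nat.cast_nonneg n : (0 : ℝ) ≤ n)]) x ih
    rw [show ((n : ℝ) - 1 / 2 + 1) = ((n + 1 : ℕ) : ℝ) - 1 / 2 by push_cast; ring] at this
    exact this

lemma bt_hasSum (n : ℕ) (x : ℝ) :
    HasSum (bt ((n : ℝ) - 1 / 2) x) (besselJt ((n : ℝ) - 1 / 2) x) :=
  (bt_summ n x).of_norm.hasSum

lemma bessel_small (n : ℕ) : ∃ C : ℝ, ∀ x : ℝ, |x| ≤ 1 → |besselJt ((n : ℝ) - 1 / 2) x| ≤ C := by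
  refine ⟨∑' m, ‖bt ((n : ℝ) - 1 / 2) 1 m‖, fun x hx => ?_⟩
  have hα : -1 < (n : ℝ) - 1 / 2 := by linarith [(Nat.cast_nonneg n : (0 : ℝ) ≤ n)]
  rw [← Real.norm_eq_abs, ← (bt_hasSum n x).tsum_eq]
  refine tsum_of_norm_bounded (bt_summ n 1).hasSum (fun m => ?_)
  rw [bt_norm _ hα, bt_norm _ hα, abs_one]
  have hG : 0 < Real.Gamma (m + ((n : ℝ) - 1 / 2) + 1) := Real.Gamma_pos_of_pos (by
    have : (0 : ℝ) ≤ m := Nat.cast_nonneg m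
    linarith)
  gcongr

lemma bessel_rec (n : ℕ) (x : ℝ) :
    (x / 2) ^ 2 * besselJt (((n + 2 : ℕ) : ℝ) - 1 / 2) x
      = ((n : ℝ) + 1 / 2) * besselJt (((n + 1 : ℕ) : ℝ) - 1 / 2) x - besselJt ((n : ℝ) - 1 / 2) x := by
  have h2 := (bt_hasSum (n + 2) x).mul_left ((x / 2) ^ 2)
  have h1 := ((bt_hasSum (n + 1) x).mul_left ((n : ℝ) + 1 / 2)).sub (bt_hasSum n x)
  have hn : (0 : ℝ) ≤ n := Nat.cast_nonneg n
  have e0 : ∀ m : ℕ, ((n : ℝ) + 1 / 2) * bt (((n + 1 : ℕ) : ℝ) - 1 / 2) x m - bt ((n : ℝ) - 1 / 2) x m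
      = - (m * bt (((n + 1 : ℕ) : ℝ) - 1 / 2) x m) := by
    intro m
    have hm : (0 : ℝ) ≤ m := Nat.cast_nonneg m
    have hG : 0 < Real.Gamma (m + n + 1 / 2) := Real.Gamma_pos_of_pos (by linarith)
    rw [bt, bt, show (m : ℝ) + ((n : ℝ) - 1 / 2) + 1 = m + n + 1 / 2 by ring,
      show (m : ℝ) + (((n + 1 : ℕ) : ℝ) - 1 / 2) + 1 = (m + n + 1 / 2) + 1 by push_cast; ring,
      Real.Gamma_add_one (by linarith)]
    have : (m : ℝ) + n + 1 / 2 ≠ 0 := by linarith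
    field_simp
    ring
  have h3 := (hasSum_congr2 h1 (fun m => (e0 m).symm) rfl)
  rw [← hasSum_nat_add_iff' 1] at h3
  simp only [Finset.range_one, Finset.sum_singleton, Nat.cast_zero, zero_mul, neg_zero, sub_zero] at h3
  refine h2.unique (hasSum_congr2 h3 (fun m => ?_) rfl)
  have hm : (0 : ℝ) ≤ m := Nat.cast_nonneg m
  rw [bt, bt,
    show ((m + 1 : ℕ) : ℝ) + (((n + 1 : ℕ) : ℝ) - 1 / 2) + 1
      = (m : ℝ) + (((n + 2 : ℕ) : ℝ) - 1 / 2) + 1 by push_cast; ring, Nat.factorial_succ]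
  have hG : 0 < Real.Gamma ((m : ℝ) + (((n + 2 : ℕ) : ℝ) - 1 / 2) + 1) :=
    Real.Gamma_pos_of_pos (by push_cast; linarith)
  push_cast at hG ⊢
  have : (m : ℝ) + 1 ≠ 0 := by linarith
  rw [show 2 * (m + 1) = 2 * m + 2 by ring, pow_add (x / 2), pow_succ (-1 : ℝ)]
  field_simp

lemma bessel_large (n : ℕ) : ∃ C : ℝ, ∀ x : ℝ, 1 ≤ |x| → |besselJt ((n : ℝ) - 1 / 2) x| ≤ C := by
  have hs : 0 < Real.sqrt Real.pi := by positivity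
  induction n using Nat.twoStepInduction with
  | zero =>
    refine ⟨1 / Real.sqrt Real.pi, fun x _ => ?_⟩
    have h1 := bt_hasSum 0 x
    rw [show (((0 : ℕ) : ℝ) - 1 / 2) = -1 / 2 by norm_num] at h1 ⊢
    rw [h1.unique (bt_zero x), abs_div, abs_of_pos hs]
    gcongr
    exact Real.abs_cos_le_one x
  | one =>
    refine ⟨2 / Real.sqrt Real.pi, fun x hx => ?_⟩
    have h1 := (bt_hasSum 1 x).mul_left x
    rw [show (((1 : ℕ) : ℝ) - 1 / 2) = 1 / 2 by norm_num] at h1 ⊢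
    have h2 := congrArg abs (h1.unique (bt_one x))
    rw [abs_mul, abs_div, abs_mul, abs_of_pos hs, abs_two] at h2
    calc |besselJt (1 / 2) x| ≤ |x| * |besselJt (1 / 2) x| :=
          le_mul_of_one_le_left (abs_nonneg _) hx
      _ = 2 * |Real.sin x| / Real.sqrt Real.pi := h2
      _ ≤ 2 / Real.sqrt Real.pi := by
          gcongr
          linarith [Real.abs_sin_le_one x]
  | more n ih1 ih2 =>
    obtain ⟨C1, h1⟩ := ih1
    obtain ⟨C2, h2⟩ := ih2
    refine ⟨4 * (((n : ℝ) + 1 / 2) * C2 + C1), fun x hx => ?_⟩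
    have h := congrArg abs (bessel_rec n x)
    have hn : (0 : ℝ) ≤ (n : ℝ) + 1 / 2 := by positivity
    rw [abs_mul, abs_pow, abs_div, abs_two] at h
    have hb : |((n : ℝ) + 1 / 2) * besselJt (((n + 1 : ℕ) : ℝ) - 1 / 2) x - besselJt ((n : ℝ) - 1 / 2) x|
        ≤ ((n : ℝ) + 1 / 2) * C2 + C1 := by
      refine (abs_sub _ _).trans ?_
      rw [abs_mul, abs_of_nonneg hn]
      have := h1 x hx
      have := h2 x hx
      gcongr
    have : (1 / 4 : ℝ) ≤ (|x| / 2) ^ 2 := by nlinarith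
    have := mul_le_mul_of_nonneg_right this (abs_nonneg (besselJt (((n + 2 : ℕ) : ℝ) - 1 / 2) x))
    linarith

lemma bessel_bound (n : ℕ) : ∃ C : ℝ, 0 ≤ C ∧ ∀ x : ℝ, |besselJt ((n : ℝ) + 1 / 2) x| ≤ C := by
  obtain ⟨C1, h1⟩ := bessel_small (n + 1)
  obtain ⟨C2, h2⟩ := bessel_large (n + 1)
  rw [show ((n + 1 : ℕ) : ℝ) - 1 / 2 = n + 1 / 2 by push_cast; ring] at h1 h2
  refine ⟨max C1 C2, ?_, fun x => ?_⟩
  · exact le_max_of_le_left ((abs_nonneg _).trans (h1 0 (by simp)))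
  · rcases le_total |x| 1 with h | h
    · exact le_max_of_le_left (h1 x h)
    · exact le_max_of_le_right (h2 x h)

lemma bessel_meas (n : ℕ) : Measurable (besselJt ((n : ℝ) + 1 / 2)) := by
  have h := bt_hasSum (n + 1)
  rw [show ((n + 1 : ℕ) : ℝ) - 1 / 2 = n + 1 / 2 by push_cast; ring] at h
  refine measurable_of_tendsto_metrizable
    (f := fun N x => ∑ m ∈ Finset.range N, bt ((n : ℝ) + 1 / 2) x m) (fun N => ?_) ?_
  · unfold bt
    fun_prop
  · rw [tendsto_pi_nhds]
    exact fun x => (h x).tendsto_sum_nat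

lemma int_pow_exp (N : ℕ) (r : ℝ) (hr : 0 < r) :
    IntegrableOn (fun x : ℝ => x ^ N * Real.exp (-(r * x))) (Set.Ioi 0) := by
  have h := integrableOn_rpow_mul_exp_neg_mul_rpow (p := 1) (s := N) (b := r)
    (by linarith [(Nat.cast_nonneg N : (0 : ℝ) ≤ N)]) one_pos hr
  simpa using h

lemma val_pow_exp (N : ℕ) (r : ℝ) (hr : 0 < r) :
    ∫ x in Set.Ioi (0 : ℝ), x ^ N * Real.exp (-(r * x)) = N.factorial / r ^ (N + 1) := by
  have h := Real.integral_rpow_mul_exp_neg_mul_Ioi (a := N + 1) (r := r) (by positivity) hr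
  rw [Real.Gamma_nat_eq_factorial] at h
  have e : (1 / r) ^ ((N : ℝ) + 1) = 1 / r ^ (N + 1) := by
    rw [show (N : ℝ) + 1 = ((N + 1 : ℕ) : ℝ) by push_cast; ring, Real.rpow_natCast]; simp
  rw [e] at h
  simp only [add_sub_cancel_right, Real.rpow_natCast] at h
  rw [h]; ring

lemma M_real (n : ℕ) (a r : ℝ) (hr : |a| < r) :
    ∫ x in Set.Ioi (0 : ℝ), x ^ (2 * n + 1) * besselJt ((n : ℝ) + 1 / 2) (a * x) * Real.exp (-(r * x))
      = 2 ^ (2 * n + 1) / Real.sqrt Real.pi * n.factorial / (r ^ 2 + a ^ 2) ^ (n + 1) := by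
  have hr0 : 0 < r := (abs_nonneg a).trans_lt hr
  have hpi : 0 < Real.sqrt Real.pi := by positivity
  have hq : a ^ 2 / r ^ 2 < 1 := by
    rw [div_lt_one (by positivity)]
    exact sq_lt_sq.2 (by rwa [abs_of_pos hr0])
  set K : ℝ := 2 ^ (2 * n + 1) / Real.sqrt Real.pi * n.factorial / r ^ (2 * n + 2) with hK
  have hform : ∀ (b x : ℝ) (m : ℕ), x ^ (2 * n + 1) * bt ((n : ℝ) + 1 / 2) (b * x) m * Real.exp (-(r * x))
      = (-1) ^ m / (m.factorial * Real.Gamma (m + ((n : ℝ) + 1 / 2) + 1)) * (b / 2) ^ (2 * m) *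
        (x ^ (2 * (m + n) + 1) * Real.exp (-(r * x))) := by
    intro b x m
    rw [bt, show b * x / 2 = b / 2 * x by ring, mul_pow, show 2 * (m + n) + 1 = 2 * n + 1 + 2 * m by ring,
      pow_add x]
    ring
  have hval : ∀ m : ℕ, 1 / (m.factorial * Real.Gamma (m + ((n : ℝ) + 1 / 2) + 1)) *
      ((2 * (m + n) + 1).factorial / r ^ (2 * (m + n) + 1 + 1))
      = K * ((m + n).choose n * (4 / r ^ 2) ^ m) := by
    intro m
    have h := gamma_dup (m + n)
    rw [show ((m + n : ℕ) : ℝ) + 3 / 2 = m + ((n : ℝ) + 1 / 2) + 1 by push_cast; ring] at h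
    have hG : 0 < Real.Gamma (m + ((n : ℝ) + 1 / 2) + 1) := Real.Gamma_pos_of_pos (by positivity)
    have h' : ((2 * (m + n) + 1).factorial : ℝ) = (m + n).factorial *
      Real.Gamma (m + ((n : ℝ) + 1 / 2) + 1) * 2 ^ (2 * (m + n) + 1) / Real.sqrt Real.pi := by
      rw [h]; field_simp
    have h2 : ((m + n).factorial : ℝ) = (m + n).choose n * m.factorial * n.factorial := by
      rw [← Nat.add_choose_mul_factorial_mul_factorial m n]
      push_cast
      rw [← Nat.choose_symm_add]
    rw [h', h2, hK, div_pow, show (4 : ℝ) = 2 ^ 2 by norm_num, ← pow_mul, ← pow_mul,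
      show 2 * (m + n) + 1 + 1 = (2 * n + 2) + 2 * m by ring,
      show 2 * (m + n) + 1 = 2 * n + 1 + 2 * m by ring, pow_add, pow_add r (2 * n + 2)]
    field_simp
  have hbt := bt_hasSum (n + 1)
  rw [show ((n + 1 : ℕ) : ℝ) - 1 / 2 = n + 1 / 2 by push_cast; ring] at hbt
  have key := hasSum_integral_of_summable_integral_norm (μ := volume.restrict (Set.Ioi (0 : ℝ)))
    (F := fun (m : ℕ) x => x ^ (2 * n + 1) * bt ((n : ℝ) + 1 / 2) (a * x) m * Real.exp (-(r * x))) ?_ ?_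
  · have e1 : ∀ x : ℝ, ∑' m, x ^ (2 * n + 1) * bt ((n : ℝ) + 1 / 2) (a * x) m * Real.exp (-(r * x))
        = x ^ (2 * n + 1) * besselJt ((n : ℝ) + 1 / 2) (a * x) * Real.exp (-(r * x)) :=
      fun x => (((hbt (a * x)).mul_left _).mul_right _).tsum_eq
    simp only [e1] at key
    have hz : ‖-(a ^ 2 / r ^ 2)‖ < 1 := by
      rw [norm_neg, Real.norm_eq_abs, abs_of_nonneg (by positivity)]; exact hq
    have h2 := (hasSum_choose_mul_geometric_of_norm_lt_one (𝕜 := ℝ) n hz).mul_left K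
    have h3 := key.unique (hasSum_congr2 h2 (fun m => ?_) rfl)
    · rw [h3, hK, show 1 - -(a ^ 2 / r ^ 2) = (r ^ 2 + a ^ 2) / r ^ 2 by field_simp; ring, div_pow,
        ← pow_mul, show 2 * (n + 1) = 2 * n + 2 by ring]
      have : (r ^ 2 + a ^ 2) ≠ 0 := by positivity
      field_simp
    · simp only [hform]
      rw [integral_const_mul, val_pow_exp _ _ hr0]
      have := hval m
      calc _ = (-1) ^ m * (a / 2) ^ (2 * m) * (1 / (m.factorial * Real.Gamma (m + ((n : ℝ) + 1 / 2) + 1)) *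
            ((2 * (m + n) + 1).factorial / r ^ (2 * (m + n) + 1 + 1))) := by ring
        _ = _ := by
          rw [this, pow_mul, div_pow a 2 2, neg_pow (a ^ 2 / r ^ 2) m,
            show a ^ 2 / r ^ 2 = (a ^ 2 / 2 ^ 2) * (4 / r ^ 2) by field_simp; norm_num,
            mul_pow (a ^ 2 / 2 ^ 2)]
          ring
  · intro m
    simp only [hform]
    exact (int_pow_exp _ _ hr0).const_mul _
  · have hz : ‖(a ^ 2 / r ^ 2)‖ < 1 := by
      rw [Real.norm_eq_abs, abs_of_nonneg (by positivity)]; exact hq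
    have h2 := (hasSum_choose_mul_geometric_of_norm_lt_one (𝕜 := ℝ) n hz).mul_left K
    refine (hasSum_congr2 h2 (fun m => ?_) rfl).summable
    have hG : 0 < Real.Gamma (m + ((n : ℝ) + 1 / 2) + 1) := Real.Gamma_pos_of_pos (by positivity)
    have e : ∀ x ∈ Set.Ioi (0 : ℝ),
        ‖x ^ (2 * n + 1) * bt ((n : ℝ) + 1 / 2) (a * x) m * Real.exp (-(r * x))‖
        = 1 / (m.factorial * Real.Gamma (m + ((n : ℝ) + 1 / 2) + 1)) * (|a| / 2) ^ (2 * m) *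
          (x ^ (2 * (m + n) + 1) * Real.exp (-(r * x))) := by
      intro x hx
      have hx0 : (0 : ℝ) < x := hx
      rw [hform, norm_mul, norm_mul, norm_div, norm_pow, norm_neg, norm_one, one_pow]
      simp only [Real.norm_eq_abs, abs_mul, abs_pow, abs_div, abs_two, abs_of_pos hx0, Nat.abs_cast,
        Real.abs_exp, abs_of_pos hG]
    rw [setIntegral_congr_fun measurableSet_Ioi e, integral_const_mul, val_pow_exp _ _ hr0]
    calc _ = (|a| / 2) ^ (2 * m) * (1 / (m.factorial * Real.Gamma (m + ((n : ℝ) + 1 / 2) + 1)) *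
            ((2 * (m + n) + 1).factorial / r ^ (2 * (m + n) + 1 + 1))) := by ring
        _ = _ := by
          rw [hval m, pow_mul, div_pow |a| 2 2, sq_abs,
            show a ^ 2 / r ^ 2 = (a ^ 2 / 2 ^ 2) * (4 / r ^ 2) by field_simp; norm_num,
            mul_pow (a ^ 2 / 2 ^ 2)]
          ring

lemma norm_cexp_neg (q : ℂ) (x : ℝ) : ‖Complex.exp (-(q * x))‖ = Real.exp (-(q.re * x)) := by
  rw [Complex.norm_exp]
  simp

lemma int_c (N n : ℕ) (a : ℝ) (q : ℂ) (hq : 0 < q.re) :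
    IntegrableOn (fun x : ℝ => (x : ℂ) ^ N * (besselJt ((n : ℝ) + 1 / 2) (a * x) : ℂ)
      * Complex.exp (-(q * x))) (Set.Ioi 0) := by
  obtain ⟨C, hC0, hC⟩ := bessel_bound n
  have hm := bessel_meas n
  refine Integrable.mono' ((int_pow_exp N q.re hq).const_mul C) ?_ ?_
  · apply Measurable.aestronglyMeasurable
    fun_prop
  · refine (ae_restrict_iff' measurableSet_Ioi).2 (Eventually.of_forall fun x hx => ?_)
    have hx0 : (0 : ℝ) < x := hx
    rw [norm_mul, norm_mul, norm_cexp_neg, norm_pow, Complex.norm_real, Complex.norm_real,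
      Real.norm_eq_abs, Real.norm_eq_abs, abs_of_pos hx0]
    have := hC (a * x)
    calc _ ≤ x ^ N * C * Real.exp (-(q.re * x)) := by gcongr
      _ = _ := by ring

lemma M_diff (n : ℕ) (a : ℝ) (q : ℂ) (hq : 0 < q.re) :
    DifferentiableAt ℂ (fun q : ℂ => ∫ x in Set.Ioi (0 : ℝ), (x : ℂ) ^ (2 * n + 1) *
      (besselJt ((n : ℝ) + 1 / 2) (a * x) : ℂ) * Complex.exp (-(q * x))) q := by
  obtain ⟨C, hC0, hC⟩ := bessel_bound n
  have hm := bessel_meas n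
  have hs : {z : ℂ | q.re / 2 < z.re} ∈ nhds q :=
    (isOpen_lt continuous_const Complex.continuous_re).mem_nhds (by
      show q.re / 2 < q.re
      linarith)
  have h := hasDerivAt_integral_of_dominated_loc_of_deriv_le (𝕜 := ℂ)
    (μ := volume.restrict (Set.Ioi (0 : ℝ)))
    (bound := fun x : ℝ => C * (x ^ (2 * n + 2) * Real.exp (-(q.re / 2 * x))))
    (F := fun (q : ℂ) (x : ℝ) => (x : ℂ) ^ (2 * n + 1) *
      (besselJt ((n : ℝ) + 1 / 2) (a * x) : ℂ) * Complex.exp (-(q * x)))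
    (F' := fun (q : ℂ) (x : ℝ) => (x : ℂ) ^ (2 * n + 1) *
      (besselJt ((n : ℝ) + 1 / 2) (a * x) : ℂ) * (Complex.exp (-(q * x)) * (-x)))
    (x₀ := q) hs ?_ (int_c _ n a q hq) ?_ ?_ ?_ ?_
  · exact h.2.differentiableAt
  · refine Eventually.of_forall fun z => ?_
    apply Measurable.aestronglyMeasurable
    fun_prop
  · apply Measurable.aestronglyMeasurable
    fun_prop
  · refine (ae_restrict_iff' measurableSet_Ioi).2 (Eventually.of_forall fun x hx z hz => ?_)
    have hx0 : (0 : ℝ) < x := hx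
    have hz' : q.re / 2 < z.re := hz
    rw [norm_mul, norm_mul, norm_mul, norm_neg, norm_cexp_neg, norm_pow, Complex.norm_real,
      Complex.norm_real, Real.norm_eq_abs, Real.norm_eq_abs, abs_of_pos hx0]
    have := hC (a * x)
    calc _ ≤ x ^ (2 * n + 1) * C * (Real.exp (-(q.re / 2 * x)) * x) := by gcongr
      _ = _ := by ring
  · exact (int_pow_exp _ _ (by linarith)).const_mul C
  · refine Eventually.of_forall fun x z _ => ?_
    apply HasDerivAt.const_mul
    have h1 : HasDerivAt (fun z : ℂ => -(z * x)) (-(x : ℂ)) z := by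
      have h2 := ((hasDerivAt_id z).mul_const (-(x : ℂ)))
      rw [one_mul] at h2
      refine h2.congr_of_eventuallyEq (Eventually.of_forall fun w => ?_)
      simp
    exact h1.cexp

lemma sq_add_ne (a : ℝ) (q : ℂ) (hq : 0 < q.re) : q ^ 2 + (a : ℂ) ^ 2 ≠ 0 := by
  intro h
  have h2 : (q + Complex.I * a) * (q - Complex.I * a) = 0 := by
    linear_combination h - (a : ℂ) ^ 2 * Complex.I_sq
  rcases mul_eq_zero.1 h2 with h3 | h3
  · have := congrArg Complex.re h3
    simp at this; linarith
  · have := congrArg Complex.re h3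
    simp at this; linarith

lemma M_cplx (n : ℕ) (a : ℝ) (q : ℂ) (hq : 0 < q.re) :
    ∫ x in Set.Ioi (0 : ℝ), (x : ℂ) ^ (2 * n + 1) *
      (besselJt ((n : ℝ) + 1 / 2) (a * x) : ℂ) * Complex.exp (-(q * x))
      = (2 ^ (2 * n + 1) / Real.sqrt Real.pi * n.factorial : ℝ) / (q ^ 2 + (a : ℂ) ^ 2) ^ (n + 1) := by
  have hopen : IsOpen {z : ℂ | 0 < z.re} := isOpen_lt continuous_const Complex.continuous_re
  have hconn : IsPreconnected {z : ℂ | 0 < z.re} := (convex_halfSpace_re_gt 0).isPreconnected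
  have hf : AnalyticOnNhd ℂ (fun q : ℂ => ∫ x in Set.Ioi (0 : ℝ), (x : ℂ) ^ (2 * n + 1) *
      (besselJt ((n : ℝ) + 1 / 2) (a * x) : ℂ) * Complex.exp (-(q * x))) {z : ℂ | 0 < z.re} :=
    DifferentiableOn.analyticOnNhd (fun z hz => (M_diff n a z hz).differentiableWithinAt) hopen
  have hg : AnalyticOnNhd ℂ (fun q : ℂ => ((2 ^ (2 * n + 1) / Real.sqrt Real.pi * n.factorial : ℝ) : ℂ)
      / (q ^ 2 + (a : ℂ) ^ 2) ^ (n + 1)) {z : ℂ | 0 < z.re} := by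
    refine DifferentiableOn.analyticOnNhd (fun z hz => ?_) hopen
    apply DifferentiableAt.differentiableWithinAt
    refine DifferentiableAt.div (by fun_prop) (by fun_prop) (pow_ne_zero _ (sq_add_ne a z hz))
  have hr : ∀ r : ℝ, |a| < r → (fun q : ℂ => ∫ x in Set.Ioi (0 : ℝ), (x : ℂ) ^ (2 * n + 1) *
      (besselJt ((n : ℝ) + 1 / 2) (a * x) : ℂ) * Complex.exp (-(q * x))) (r : ℂ)
      = ((2 ^ (2 * n + 1) / Real.sqrt Real.pi * n.factorial : ℝ) : ℂ)
      / ((r : ℂ) ^ 2 + (a : ℂ) ^ 2) ^ (n + 1) := by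
    intro r har
    have h := congrArg (fun y : ℝ => (y : ℂ)) (M_real n a r har)
    rw [← integral_complex_ofReal] at h
    push_cast at h ⊢
    exact h
  have h0 : (0 : ℝ) < |a| + 1 := by positivity
  refine hf.eqOn_of_preconnected_of_frequently_eq hg hconn (z₀ := ((|a| + 1 : ℝ) : ℂ)) ?_ ?_ hq
  · show 0 < (((|a| + 1 : ℝ) : ℂ)).re
    rw [Complex.ofReal_re]; exact h0
  · have ht : Tendsto (fun r : ℝ => (r : ℂ)) (nhdsWithin (|a| + 1) (Set.Ioi (|a| + 1)))
        (nhdsWithin ((|a| + 1 : ℝ) : ℂ) {((|a| + 1 : ℝ) : ℂ)}ᶜ) := by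
      refine tendsto_nhdsWithin_iff.2 ⟨?_, ?_⟩
      · exact (Complex.continuous_ofReal.tendsto _).mono_left nhdsWithin_le_nhds
      · filter_upwards [self_mem_nhdsWithin] with r hr
        have : |a| + 1 < r := hr
        simp only [Set.mem_compl_iff, Set.mem_singleton_iff, Complex.ofReal_inj]
        exact this.ne'
    refine ht.frequently (Eventually.frequently ?_)
    filter_upwards [self_mem_nhdsWithin] with r har
    have : |a| + 1 < r := har
    exact hr r (by linarith)

lemma lag_abs (j μ : ℕ) (x : ℝ) (hx : 0 ≤ x) : |laguerreL j μ x| ≤ laguerreL j μ (-x) := by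
  unfold laguerreL
  refine (Finset.abs_sum_le_sum_abs _ _).trans (Finset.sum_le_sum fun k _ => le_of_eq ?_)
  rw [abs_div, abs_mul, abs_mul, abs_pow, abs_neg, abs_one, one_pow, abs_pow, abs_of_nonneg hx,
    Nat.abs_cast, Nat.abs_cast, neg_pow x]
  have : ((-1 : ℝ)) ^ k * (-1) ^ k = 1 := by rw [← mul_pow]; norm_num
  linear_combination (-((j + μ).choose (j - k) : ℝ) * x ^ k / k.factorial) * this

lemma lag_gen_real (μ : ℕ) (x t : ℝ) (ht0 : 0 ≤ t) (ht : t < 1) :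
    HasSum (fun j => laguerreL j μ x * t ^ j)
      (1 / (1 - t) ^ (μ + 1) * Real.exp (-(x * t / (1 - t)))) := by
  have h := laguerre_gen μ x (t : ℂ) (by
    rw [Complex.norm_real, Real.norm_eq_abs, abs_of_nonneg ht0]; exact ht)
  have := Complex.hasSum_re h
  convert this using 1
  · ext j
    rw [← Complex.ofReal_pow, ← Complex.ofReal_mul, Complex.ofReal_re]
  · rw [show (1 / (1 - (t : ℂ)) ^ (μ + 1) * Complex.exp (-(x * t / (1 - t))))
      = ((1 / (1 - t) ^ (μ + 1) * Real.exp (-(x * t / (1 - t))) : ℝ) : ℂ) by push_cast; rfl,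
      Complex.ofReal_re]

lemma lag_meas (j μ : ℕ) : Measurable (laguerreL j μ) := by
  unfold laguerreL
  fun_prop

lemma gen_int (n : ℕ) (a b : ℝ) (t : ℂ) (ht : ‖t‖ < 1 / 4) :
    HasSum (fun j => (∫ x in Set.Ioi (0 : ℝ), (laguerreL j (2 * n + 1) (2 * x) : ℂ) *
      ((x : ℂ) ^ (2 * n + 1) * (besselJt ((n : ℝ) + 1 / 2) (a * x) : ℂ)
        * Complex.exp (-((1 - b * Complex.I) * x)))) * t ^ j)
      ((2 ^ (2 * n + 1) / Real.sqrt Real.pi * n.factorial : ℝ) /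
        (((1 + t) - b * Complex.I * (1 - t)) ^ 2 + (a : ℂ) ^ 2 * (1 - t) ^ 2) ^ (n + 1)) := by
  obtain ⟨C, hC0, hC⟩ := bessel_bound n
  have hm := bessel_meas n
  have hl := lag_meas
  have h1t : (1 - t) ≠ 0 := by
    intro h
    have : t = 1 := by linear_combination -h
    rw [this] at ht; norm_num at ht
  have hn1 : 3 / 4 ≤ ‖1 - t‖ := by
    have := norm_sub_norm_le 1 t
    rw [norm_one] at this
    linarith
  set q : ℂ := (1 - b * Complex.I) + 2 * t / (1 - t) with hqdef
  have hq : 0 < q.re := by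
    have h1 : ‖2 * t / (1 - t)‖ < 1 := by
      rw [norm_div, norm_mul, div_lt_one (by linarith)]
      norm_num
      linarith
    have h2 := (abs_le.1 (Complex.abs_re_le_norm (2 * t / (1 - t)))).1
    rw [hqdef, Complex.add_re]
    have : (1 - (b : ℂ) * Complex.I).re = 1 := by simp
    rw [this]
    linarith
  set s : ℝ := ‖t‖ with hs
  have hs0 : 0 ≤ s := norm_nonneg t
  have key := hasSum_integral_of_dominated_convergence (μ := volume.restrict (Set.Ioi (0 : ℝ)))
    (F := fun (j : ℕ) (x : ℝ) => (laguerreL j (2 * n + 1) (2 * x) : ℂ) *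
      ((x : ℂ) ^ (2 * n + 1) * (besselJt ((n : ℝ) + 1 / 2) (a * x) : ℂ)
        * Complex.exp (-((1 - b * Complex.I) * x))) * t ^ j)
    (f := fun x : ℝ => (1 / (1 - t) ^ (2 * n + 1 + 1)) * ((x : ℂ) ^ (2 * n + 1) *
      (besselJt ((n : ℝ) + 1 / 2) (a * x) : ℂ) * Complex.exp (-(q * x))))
    (fun (j : ℕ) (x : ℝ) => laguerreL j (2 * n + 1) (-(2 * x)) * s ^ j *
      (C * (x ^ (2 * n + 1) * Real.exp (-(1 * x))))) ?_ ?_ ?_ ?_ ?_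
  · rw [integral_const_mul, M_cplx n a q hq] at key
    refine hasSum_congr2 key (fun j => ?_) ?_
    · rw [integral_mul_const]
    · have e : ((1 + t) - b * Complex.I * (1 - t)) ^ 2 + (a : ℂ) ^ 2 * (1 - t) ^ 2
          = (1 - t) ^ 2 * (q ^ 2 + (a : ℂ) ^ 2) := by
        rw [hqdef]; field_simp; ring
      have h2 := sq_add_ne a q hq
      rw [e, mul_pow, ← pow_mul, show 2 * (n + 1) = 2 * n + 1 + 1 by ring]
      field_simp
  · intro j
    apply Measurable.aestronglyMeasurable
    fun_prop
  · intro j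
    refine (ae_restrict_iff' measurableSet_Ioi).2 (Eventually.of_forall fun x hx => ?_)
    have hx0 : (0 : ℝ) < x := hx
    rw [norm_mul, norm_mul, norm_mul, norm_mul, norm_cexp_neg, norm_pow, norm_pow,
      Complex.norm_real, Complex.norm_real, Complex.norm_real,
      Real.norm_eq_abs, Real.norm_eq_abs, Real.norm_eq_abs, abs_of_pos hx0]
    have e : (1 - (b : ℂ) * Complex.I).re = 1 := by simp
    rw [e]
    have h1 := hC (a * x)
    have h2 := lag_abs j (2 * n + 1) (2 * x) (by linarith)
    have h3 := (abs_nonneg _).trans h2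
    calc _ ≤ laguerreL j (2 * n + 1) (-(2 * x)) * (x ^ (2 * n + 1) * C * Real.exp (-(1 * x))) * s ^ j := by
          gcongr
      _ = _ := by ring
  · refine Eventually.of_forall fun x => ?_
    exact ((lag_gen_real (2 * n + 1) (-(2 * x)) s hs0 (by linarith)).summable).mul_right _
  · have e : ∀ x : ℝ, ∑' j, laguerreL j (2 * n + 1) (-(2 * x)) * s ^ j *
        (C * (x ^ (2 * n + 1) * Real.exp (-(1 * x))))
        = (1 / (1 - s) ^ (2 * n + 1 + 1) * C) *
          (x ^ (2 * n + 1) * Real.exp (-((1 - 2 * s / (1 - s)) * x))) := by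
      intro x
      rw [((lag_gen_real (2 * n + 1) (-(2 * x)) s hs0 (by linarith)).mul_right _).tsum_eq]
      rw [show -((1 - 2 * s / (1 - s)) * x) = -(-(2 * x) * s / (1 - s)) + -(1 * x) by ring, Real.exp_add]
      ring
    simp only [e]
    refine (int_pow_exp _ _ ?_).const_mul _
    rw [sub_pos, div_lt_one (by linarith)]
    linarith
  · refine Eventually.of_forall fun x => ?_
    have h := (laguerre_gen (2 * n + 1) (2 * x) t (by rw [← hs]; linarith)).mul_right
      ((x : ℂ) ^ (2 * n + 1) * (besselJt ((n : ℝ) + 1 / 2) (a * x) : ℂ)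
        * Complex.exp (-((1 - b * Complex.I) * x)))
    refine hasSum_congr2 h (fun j => by ring) ?_
    rw [show -(q * x) = -(((2 * x : ℝ) : ℂ) * t / (1 - t)) + -((1 - b * Complex.I) * x) by
      rw [hqdef]; push_cast; ring, Complex.exp_add]
    ring

lemma cplx_main (n j : ℕ) (ϑ φ : ℝ) (hpos : Real.cos ϑ + Real.cos φ > 0) :
    ∫ x in Set.Ioi (0 : ℝ), (laguerreL j (2 * n + 1) (2 * x) : ℂ) *
      ((x : ℂ) ^ (2 * n + 1) *
        (besselJt ((n : ℝ) + 1 / 2) (Real.sin ϑ / (Real.cos ϑ + Real.cos φ) * x) : ℂ)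
        * Complex.exp (-((1 - (Real.sin φ / (Real.cos ϑ + Real.cos φ) : ℝ) * Complex.I) * x)))
    = ((-1) ^ j * (2 ^ (2 * n + 1) / Real.sqrt Real.pi) * ((Real.cos ϑ + Real.cos φ) / 2) ^ (n + 1)
        * gegenbauerCt j (n + 1) (Real.cos ϑ) : ℝ) *
      Complex.exp (((j + (n + 1)) * φ : ℝ) * Complex.I) := by
  set s := Real.cos ϑ + Real.cos φ with hs
  set a := Real.sin ϑ / s with ha
  set b := Real.sin φ / s with hb
  set e : ℂ := Complex.exp (φ * Complex.I) with he
  have hen : ‖e‖ = 1 := Complex.norm_exp_ofReal_mul_I φ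
  have he0 : e ≠ 0 := Complex.exp_ne_zero _
  have hsC : (s : ℂ) ≠ 0 := by exact_mod_cast hpos.ne'
  set K : ℂ := ((2 ^ (2 * n + 1) / Real.sqrt Real.pi : ℝ) : ℂ) with hK
  have hexp : e = Real.cos φ + Real.sin φ * Complex.I := by
    rw [he, Complex.exp_mul_I, Complex.ofReal_cos, Complex.ofReal_sin]
  have hconj : e * (Real.cos φ - Real.sin φ * Complex.I) = 1 := by
    rw [hexp]
    have : (Real.sin φ : ℂ) ^ 2 + (Real.cos φ : ℂ) ^ 2 = 1 := by
      exact_mod_cast Real.sin_sq_add_cos_sq φ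
    linear_combination this - (Real.sin φ : ℂ) ^ 2 * Complex.I_sq
  have hab : a ^ 2 - b ^ 2 = (Real.cos φ - Real.cos ϑ) / s := by
    rw [ha, hb]
    have h1 := Real.sin_sq_add_cos_sq φ
    have h2 := Real.sin_sq_add_cos_sq ϑ
    field_simp
    rw [hs]
    linear_combination h2 - h1
  have habC : (a : ℂ) ^ 2 - (b : ℂ) ^ 2 = (Real.cos φ - Real.cos ϑ) / s := by exact_mod_cast hab
  have hbC : (b : ℂ) = Real.sin φ / s := by rw [hb]; push_cast; rfl
  have hsum : (s : ℂ) = Real.cos ϑ + Real.cos φ := by rw [hs]; push_cast; rfl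
  have hden : ∀ t : ℂ, ((1 + t) - b * Complex.I * (1 - t)) ^ 2 + (a : ℂ) ^ 2 * (1 - t) ^ 2
      = 2 / (s * e) * (1 - 2 * Real.cos ϑ * (-e * t) + (-e * t) ^ 2) := by
    intro t
    have h1 : ((1 + t) - b * Complex.I * (1 - t)) ^ 2 + (a : ℂ) ^ 2 * (1 - t) ^ 2
        = (1 + t) ^ 2 - 2 * b * Complex.I * (1 - t ^ 2) + (a ^ 2 - b ^ 2) * (1 - t) ^ 2 := by
      linear_combination (b : ℂ) ^ 2 * (1 - t) ^ 2 * Complex.I_sq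
    have h2 : 2 / (s * e) * (1 - 2 * Real.cos ϑ * (-e * t) + (-e * t) ^ 2)
        = (2 / s) * ((Real.cos φ - Real.sin φ * Complex.I) + 2 * Real.cos ϑ * t + e * t ^ 2) := by
      have : (Real.cos φ - Real.sin φ * Complex.I) = 1 / e := by
        field_simp; linear_combination hconj
      rw [this]
      field_simp
      ring
    rw [h1, h2, habC, hbC, hexp]
    field_simp
    rw [hsum]
    ring
  have hu := coeff_unique _
    (fun j => K * ((s / 2) * e) ^ (n + 1) * ((-e) ^ j * gegenbauerCt j (n + 1) (Real.cos ϑ)))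
    (fun t => ((2 ^ (2 * n + 1) / Real.sqrt Real.pi * n.factorial : ℝ) /
        (((1 + t) - b * Complex.I * (1 - t)) ^ 2 + (a : ℂ) ^ 2 * (1 - t) ^ 2) ^ (n + 1)))
    (1 / 4) (by norm_num) (gen_int n a b) (fun t ht => ?_)
  · have := congrFun hu j
    rw [this, hK]
    have h3 : Complex.exp (((j + (n + 1)) * φ : ℝ) * Complex.I) = e ^ (j + (n + 1)) := by
      rw [he, ← Complex.exp_nat_mul]
      congr 1
      push_cast; ring
    rw [h3]
    push_cast
    rw [neg_pow e j, mul_pow, pow_add e]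
    ring
  · have h := (gegen_gen n (Real.cos ϑ) (Real.abs_cos_le_one ϑ) (-e * t) (by
      rw [norm_mul, norm_neg, hen, one_mul]; exact ht)).mul_left (K * ((s / 2) * e) ^ (n + 1))
    refine hasSum_congr2 h (fun j => ?_) ?_
    · rw [mul_pow (-e) t]; ring
    · rw [hden t, mul_pow, div_pow, hK]
      push_cast
      rw [mul_pow (s : ℂ) e, mul_pow ((s : ℂ) / 2) e, div_pow (s : ℂ) 2]
      by_cases h0 : (1 - 2 * Complex.cos ϑ * (-e * t) + (-e * t) ^ 2) = 0
      · rw [h0]; simp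
      · have : ((Real.sqrt Real.pi : ℝ) : ℂ) ≠ 0 := by
          exact_mod_cast (Real.sqrt_pos.2 Real.pi_pos).ne'
        generalize (1 - 2 * Complex.cos ϑ * (-e * t) + (-e * t) ^ 2) = w at h0 ⊢
        field_simp

/-- **Corollary C, cosine version.** -/
theorem corollaryC_cos (μ : ℕ) (hμ : Odd μ) (hμ1 : 1 ≤ μ) (j : ℕ)
    (ϑ φ : ℝ) (hϑ : ϑ ∈ Set.Icc (0 : ℝ) Real.pi) (hφ : φ ∈ Set.Icc (0 : ℝ) Real.pi)
    (hpos : Real.cos ϑ + Real.cos φ > 0) :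
    ∫ x in Set.Ioi (0 : ℝ),
        laguerreL j μ (2 * x)
          * besselJt ((μ : ℝ) / 2) (Real.sin ϑ / (Real.cos ϑ + Real.cos φ) * x)
          * Real.cos (Real.sin φ / (Real.cos ϑ + Real.cos φ) * x)
          * x ^ (μ : ℝ) * Real.exp (-x)
      = (-1) ^ j * ((2 : ℝ) ^ μ / Real.sqrt Real.pi)
          * ((Real.cos ϑ + Real.cos φ) / 2) ^ (((μ : ℝ) + 1) / 2)
          * Real.cos ((j + ((μ : ℝ) + 1) / 2) * φ)
          * gegenbauerCt j (((μ : ℝ) + 1) / 2) (Real.cos ϑ) := by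
  obtain ⟨n, rfl⟩ := hμ
  have h := congrArg Complex.re (cplx_main n j ϑ φ hpos)
  set s := Real.cos ϑ + Real.cos φ with hs
  have hint : Integrable (fun x : ℝ => (laguerreL j (2 * n + 1) (2 * x) : ℂ) *
      ((x : ℂ) ^ (2 * n + 1) *
        (besselJt ((n : ℝ) + 1 / 2) (Real.sin ϑ / s * x) : ℂ)
        * Complex.exp (-((1 - (Real.sin φ / s : ℝ) * Complex.I) * x))))
      (volume.restrict (Set.Ioi (0 : ℝ))) := by
    unfold laguerreL
    push_cast
    simp only [Finset.sum_mul]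
    refine integrable_finsetSum _ fun k _ => ?_
    have h1 := (int_c (k + (2 * n + 1)) n (Real.sin ϑ / s) (1 - (Real.sin φ / s : ℝ) * Complex.I)
      (by simp)).const_mul
      ((-1) ^ k * ((j + (2 * n + 1)).choose (j - k) : ℂ) * 2 ^ k / (k.factorial : ℂ))
    refine h1.congr (Eventually.of_forall fun x => ?_)
    simp only []
    push_cast
    rw [mul_pow, pow_add]
    ring
  have hre := integral_re hint
  simp only [RCLike.re_eq_complex_re] at hre
  rw [← hre, Complex.re_ofReal_mul, Complex.exp_ofReal_mul_I_re] at h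
  have e1 : (((2 * n + 1 : ℕ) : ℝ) + 1) / 2 = ((n + 1 : ℕ) : ℝ) := by push_cast; ring
  have e2 : ((2 * n + 1 : ℕ) : ℝ) / 2 = (n : ℝ) + 1 / 2 := by push_cast; ring
  rw [e1, e2, Real.rpow_natCast]
  push_cast
  refine Eq.trans ?_ (h.trans (by ring))
  refine setIntegral_congr_fun measurableSet_Ioi fun x _ => ?_
  have e3 : (Complex.exp (-((1 - (Real.sin φ / s : ℝ) * Complex.I) * x))).re
      = Real.exp (-x) * Real.cos (Real.sin φ / s * x) := by
    generalize Real.sin φ / s = b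
    rw [Complex.exp_re]
    congr 2 <;> simp
  have e4 : (laguerreL j (2 * n + 1) (2 * x) : ℂ) *
      ((x : ℂ) ^ (2 * n + 1) *
        (besselJt ((n : ℝ) + 1 / 2) (Real.sin ϑ / s * x) : ℂ)
        * Complex.exp (-((1 - (Real.sin φ / s : ℝ) * Complex.I) * x)))
      = ((laguerreL j (2 * n + 1) (2 * x) * (x ^ (2 * n + 1) *
          besselJt ((n : ℝ) + 1 / 2) (Real.sin ϑ / s * x)) : ℝ) : ℂ) *
        Complex.exp (-((1 - (Real.sin φ / s : ℝ) * Complex.I) * x)) := by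
    push_cast; ring
  rw [e4, Complex.re_ofReal_mul, e3]
  have e5 : x ^ ((2 : ℝ) * n + 1) = x ^ (2 * n + 1) := by
    rw [← Real.rpow_natCast]; push_cast; rfl
  rw [e5]
  ring
end
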